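/- arXiv:1804.05511 — 2 statements merged into one kernel-verified Lean document; each statement's English description precedes it below -/
import Mathlib

section
/- Let s ∈ ℕ, let V¹, V², V³ be mutually disjoint finite sets of equal size, let m = w*(s) + 1, and let V^1 ≻ ⋯ ≻ V^m be a sequence of m successively refined equitable partitions, each refining {V¹,V²,V³}, such that for every 1 ≤ i ≤ m the restriction V^i_h of V^i to V^h has exactly t(i) parts for each h ∈ {1,2,3}. Then there is a 3-partite 3-graph H on (V¹,V²,V³) of density exactly 2^(−s) satisfying: if (Z,E) is a ⟨2^(−70)⟩-regular partition of H and for some 1 ≤ i ≤ w(s) one has Z_3 ≺_{2^(−9)} V^i_3 and Z_2 ≺_{2^(−9)} V^i_2, then Z_1 ≺_{2^(−9)} V^{i+1}_1. -/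
open scoped Classical

noncomputable section

/-- The number of edges of a bipartite graph `G` between vertex subsets `A` and `B`. -/
def bmEdges {α β : Type*} (G : Finset (α × β)) (A : Finset α) (B : Finset β) : ℕ :=
  (G.filter fun p => p.1 ∈ A ∧ p.2 ∈ B).card

/-- The edge density of a bipartite graph `G` between `A` and `B`. -/
def bmDens {α β : Type*} (G : Finset (α × β)) (A : Finset α) (B : Finset β) : ℝ :=
  (bmEdges G A B : ℝ) / ((A.card : ℝ) * (B.card : ℝ))

/-- `⟨δ⟩`-regularity of a bipartite graph `G` on vertex classes `(A, B)`:
for all `A' ⊆ A`, `B' ⊆ B` with `|A'| ≥ δ|A|`, `|B'| ≥ δ|B|` we have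
`d_G(A',B') ≥ (1/2) d_G(A,B)`. -/
def DeltaReg {α β : Type*} (δ : ℝ) (G : Finset (α × β)) (A : Finset α) (B : Finset β) : Prop :=
  ∀ A' ⊆ A, ∀ B' ⊆ B, δ * (A.card : ℝ) ≤ (A'.card : ℝ) → δ * (B.card : ℝ) ≤ (B'.card : ℝ) →
    bmDens G A' B' ≥ (1 / 2) * bmDens G A B

/-- Szemerédi `ε`-regularity of a bipartite graph on `(A, B)`. -/
def SzReg {α β : Type*} (ε : ℝ) (G : Finset (α × β)) (A : Finset α) (B : Finset β) : Prop :=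
  ∀ A' ⊆ A, ∀ B' ⊆ B, ε * (A.card : ℝ) ≤ (A'.card : ℝ) → ε * (B.card : ℝ) ≤ (B'.card : ℝ) →
    |bmDens G A' B' - bmDens G A B| ≤ ε

/-- `P` is a partition of the finite set `S` (into nonempty parts). -/
def IsPartition {α : Type*} (P : Finset (Finset α)) (S : Finset α) : Prop :=
  (∀ p ∈ P, p.Nonempty) ∧ (∀ p ∈ P, p ⊆ S) ∧ ∀ v ∈ S, ∃! p, p ∈ P ∧ v ∈ p

/-- `Q` refines `P`: every member of `Q` is contained in a member of `P`. -/
def Refines {α : Type*} (Q P : Finset (Finset α)) : Prop :=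
  ∀ q ∈ Q, ∃ p ∈ P, q ⊆ p

/-- All parts of `P` have the same size. -/
def EquitableParts {α : Type*} (P : Finset (Finset α)) : Prop :=
  ∀ p ∈ P, ∀ q ∈ P, p.card = q.card

/-- `S ⊆_β T`, i.e. `|S \ T| < β |S|`. -/
def ApproxSub {α : Type*} [DecidableEq α] (β' : ℝ) (S T : Finset α) : Prop :=
  ((S \ T).card : ℝ) < β' * (S.card : ℝ)

/-- `S ∈_β P`, i.e. `S ⊆_β p` for some `p ∈ P`. -/
def ApproxMem {α : Type*} [DecidableEq α] (β' : ℝ) (S : Finset α) (P : Finset (Finset α)) :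
    Prop :=
  ∃ p ∈ P, ApproxSub β' S p

/-- `Q ≺_β P` for partitions `Q`, `P` of the set `S`. -/
def ApproxRefines {α : Type*} [DecidableEq α] (β' : ℝ) (Q P : Finset (Finset α))
    (S : Finset α) : Prop :=
  ∑ q ∈ Q.filter fun q => ¬ ApproxMem β' q P, (q.card : ℝ) ≤ β' * (S.card : ℝ)

/-- The vertex partition `P ∪ Q` of a bipartite graph `G` on vertex classes `(L, R)` is
`⟨δ⟩`-regular: one can add/remove at most `δ·e(G)` edges so that the bipartite graph induced
on each pair of distinct parts is `⟨δ⟩`-regular. -/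
def DeltaRegPartition {α β : Type*} [DecidableEq α] [DecidableEq β]
    (δ : ℝ) (G : Finset (α × β)) (L : Finset α) (R : Finset β)
    (P : Finset (Finset α)) (Q : Finset (Finset β)) : Prop :=
  ∃ G' : Finset (α × β), G' ⊆ L ×ˢ R ∧
    ((G' \ G).card : ℝ) + ((G \ G').card : ℝ) ≤ δ * (G.card : ℝ) ∧
    ∀ A ∈ P, ∀ B ∈ Q, DeltaReg δ G' A B

/-- The vertex partition `P ∪ Q` of a bipartite graph `G` is perfectly `⟨δ⟩`-regular:
without modifying any edges, each pair of distinct parts induces a `⟨δ⟩`-regular graph. -/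
def PerfectDeltaRegPartition {α β : Type*} (δ : ℝ) (G : Finset (α × β))
    (P : Finset (Finset α)) (Q : Finset (Finset β)) : Prop :=
  ∀ A ∈ P, ∀ B ∈ Q, DeltaReg δ G A B

/-- A 2-partition `(Z, E)` on the vertex set `S`: `Z` partitions `S`, the members of `E` are
pairwise edge-disjoint bipartite graphs between distinct parts of `Z`, and for all distinct
`Z1, Z2 ∈ Z` the complete bipartite graph `Z1 × Z2` is the union of the members of `E`
between `Z1` and `Z2`. -/
def Is2Partition {α : Type*} [DecidableEq α]
    (Z : Finset (Finset α)) (E : Finset (Finset (α × α))) (S : Finset α) : Prop :=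
  IsPartition Z S ∧
  (∀ g ∈ E, ∃ Z1 ∈ Z, ∃ Z2 ∈ Z, Z1 ≠ Z2 ∧ g ⊆ Z1 ×ˢ Z2) ∧
  (∀ g ∈ E, ∀ g' ∈ E, g ≠ g' → Disjoint g g') ∧
  ∀ Z1 ∈ Z, ∀ Z2 ∈ Z, Z1 ≠ Z2 → ∀ p ∈ Z1 ×ˢ Z2, ∃ g ∈ E, g ⊆ Z1 ×ˢ Z2 ∧ p ∈ g

/-- The parts of `Z` contained in `A` (e.g. `Z_i`, the restriction of `Z` to `V_i`). -/
def partsIn {α : Type*} [DecidableEq α] (Z : Finset (Finset α)) (A : Finset α) :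
    Finset (Finset α) :=
  Z.filter fun z => z ⊆ A

/-- The members of `E` contained in `A × B` (e.g. `E_i`). -/
def graphsIn {α : Type*} [DecidableEq α] (E : Finset (Finset (α × α))) (A B : Finset α) :
    Finset (Finset (α × α)) :=
  E.filter fun g => g ⊆ A ×ˢ B

/-- `H` is a 3-partite 3-graph on the (disjoint) vertex classes `(V1, V2, V3)`. -/
def Is3Partite {α : Type*} (H : Finset (α × α × α)) (V1 V2 V3 : Finset α) : Prop :=
  (Disjoint V1 V2 ∧ Disjoint V1 V3 ∧ Disjoint V2 V3) ∧ H ⊆ V1 ×ˢ V2 ×ˢ V3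

/-- The auxiliary bipartite graph `G_H^1` on `(V2 × V3, V1)`. -/
def GH1 {α : Type*} [DecidableEq α] (H : Finset (α × α × α)) : Finset ((α × α) × α) :=
  H.image fun t => ((t.2.1, t.2.2), t.1)

/-- The auxiliary bipartite graph `G_H^2` on `(V1 × V3, V2)`. -/
def GH2 {α : Type*} [DecidableEq α] (H : Finset (α × α × α)) : Finset ((α × α) × α) :=
  H.image fun t => ((t.1, t.2.2), t.2.1)

/-- The auxiliary bipartite graph `G_H^3` on `(V1 × V2, V3)`. -/
def GH3 {α : Type*} [DecidableEq α] (H : Finset (α × α × α)) : Finset ((α × α) × α) :=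
  H.image fun t => ((t.1, t.2.1), t.2.2)

/-- The 2-partition `(Z, E)` is `⟨δ⟩`-good: every bipartite graph in `E` (between any two
distinct vertex clusters of `Z`) is `⟨δ⟩`-regular. -/
def DeltaGood {α : Type*} [DecidableEq α] (δ : ℝ)
    (Z : Finset (Finset α)) (E : Finset (Finset (α × α))) : Prop :=
  ∀ g ∈ E, ∀ Z1 ∈ Z, ∀ Z2 ∈ Z, Z1 ≠ Z2 → g ⊆ Z1 ×ˢ Z2 → DeltaReg δ g Z1 Z2

/-- `(Z, E)` is a `⟨δ⟩`-regular partition of the 3-partite 3-graph `H` on `(V1, V2, V3)`: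
it is a `⟨δ⟩`-good 2-partition with `Z ≺ {V1, V2, V3}` and, for each `1 ≤ i ≤ 3`,
`E_i ∪ Z_i` is a `⟨δ⟩`-regular vertex partition of `G_H^i`. -/
def Delta3RegPartition {α : Type*} [DecidableEq α] (δ : ℝ) (H : Finset (α × α × α))
    (V1 V2 V3 : Finset α) (Z : Finset (Finset α)) (E : Finset (Finset (α × α))) : Prop :=
  Is2Partition Z E (V1 ∪ V2 ∪ V3) ∧ Refines Z {V1, V2, V3} ∧ DeltaGood δ Z E ∧
  DeltaRegPartition δ (GH1 H) (V2 ×ˢ V3) V1 (graphsIn E V2 V3) (partsIn Z V1) ∧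
  DeltaRegPartition δ (GH2 H) (V1 ×ˢ V3) V2 (graphsIn E V1 V3) (partsIn Z V2) ∧
  DeltaRegPartition δ (GH3 H) (V1 ×ˢ V2) V3 (graphsIn E V1 V2) (partsIn Z V3)

/-- The tower function: `twr 0 = 1` and `twr (x+1) = 2 ^ twr x`. -/
def twr : ℕ → ℕ
  | 0 => 1
  | n + 1 => 2 ^ twr n

/-- The wowzer function: `twr` iterated `x` times, applied to `1`. -/
def wow (x : ℕ) : ℕ := twr^[x] 1

/-- The set of triangles of the triad given by bipartite graphs `e1`, `e2`, `e3`: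
triples `(a, b, c)` with `(a,b) ∈ e1`, `(a,c) ∈ e2` and `(b,c) ∈ e3`. -/
def tri {α β γ : Type*} [DecidableEq α] [DecidableEq β] [DecidableEq γ]
    (e1 : Finset (α × β)) (e2 : Finset (α × γ)) (e3 : Finset (β × γ)) :
    Finset (α × β × γ) :=
  ((e1 ×ˢ e3).filter fun q => q.1.2 = q.2.1 ∧ (q.1.1, q.2.2) ∈ e2).image
    fun q => (q.1.1, q.1.2, q.2.2)

/-- The density `d_H(P)` of a triad `P = (e1, e2, e3)` in the 3-graph `H`. -/
def triDens {α : Type*} [DecidableEq α] (H : Finset (α × α × α))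
    (e1 e2 e3 : Finset (α × α)) : ℝ :=
  ((H ∩ tri e1 e2 e3).card : ℝ) / ((tri e1 e2 e3).card : ℝ)

/-- The triad `(e1, e2, e3)` is `ε`-regular in the 3-graph `H`: every subtriad `(f1, f2, f3)`
with `t(P') ≥ ε t(P)` satisfies `|d_H(P') - d_H(P)| ≤ ε`. -/
def TriadReg {α : Type*} [DecidableEq α] (ε : ℝ) (H : Finset (α × α × α))
    (e1 e2 e3 : Finset (α × α)) : Prop :=
  ∀ f1 ⊆ e1, ∀ f2 ⊆ e2, ∀ f3 ⊆ e3,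
    ε * ((tri e1 e2 e3).card : ℝ) ≤ ((tri f1 f2 f3).card : ℝ) →
    |triDens H f1 f2 f3 - triDens H e1 e2 e3| ≤ ε

/-- The triads of the 2-partition `(Z, E)`: triples of members of `E` forming a tripartite
graph on three distinct parts of `Z`. -/
def triads {α : Type*} [DecidableEq α] (Z : Finset (Finset α))
    (E : Finset (Finset (α × α))) :
    Finset (Finset (α × α) × Finset (α × α) × Finset (α × α)) :=
  (E ×ˢ E ×ˢ E).filter fun e => ∃ Z1 ∈ Z, ∃ Z2 ∈ Z, ∃ Z3 ∈ Z,
    Z1 ≠ Z2 ∧ Z1 ≠ Z3 ∧ Z2 ≠ Z3 ∧ e.1 ⊆ Z1 ×ˢ Z2 ∧ e.2.1 ⊆ Z1 ×ˢ Z3 ∧ e.2.2 ⊆ Z2 ×ˢ Z3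

/-- An `(ℓ, t, ε₂)`-equipartition on `S`: a 2-partition `(Z, E)` where `Z` is an equitable
partition of order `t` and every graph in `E` is `ε₂`-regular of density `ℓ⁻¹ ± ε₂`. -/
def IsEquipartition23 {α : Type*} [DecidableEq α] (ℓ t : ℕ) (ε₂ : ℝ)
    (Z : Finset (Finset α)) (E : Finset (Finset (α × α))) (S : Finset α) : Prop :=
  Is2Partition Z E S ∧ EquitableParts Z ∧ Z.card = t ∧
  ∀ g ∈ E, ∀ Z1 ∈ Z, ∀ Z2 ∈ Z, Z1 ≠ Z2 → g ⊆ Z1 ×ˢ Z2 →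
    SzReg ε₂ g Z1 Z2 ∧ |bmDens g Z1 Z2 - 1 / (ℓ : ℝ)| ≤ ε₂

/-- The `(ℓ,t,ε₂)`-equipartition `(Z, E)` is an `ε`-regular partition of the 3-graph `H`
with vertex set `S` (Frankl–Rödl): `Σ t(P) ≤ ε |S|³`, summed over non-`ε`-regular triads. -/
def FRRegPartition {α : Type*} [DecidableEq α] (ε : ℝ) (H : Finset (α × α × α))
    (S : Finset α) (Z : Finset (Finset α)) (E : Finset (Finset (α × α))) : Prop :=
  ∑ e ∈ (triads Z E).filter fun e => ¬ TriadReg ε H e.1 e.2.1 e.2.2,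
    ((tri e.1 e.2.1 e.2.2).card : ℝ) ≤ ε * (S.card : ℝ) ^ 3

/-- The function `f` from the definition of quasirandomness of a triad. -/
def fQ {α : Type*} [DecidableEq α] (H : Finset (α × α × α)) (e1 e2 e3 : Finset (α × α))
    (x y z : α) : ℝ :=
  if (x, y, z) ∈ tri e1 e2 e3 then
    (if (x, y, z) ∈ H then 1 - triDens H e1 e2 e3 else -triDens H e1 e2 e3)
  else 0

/-- The octahedron sum from the definition of quasirandomness. -/
def octSum {α : Type*} [DecidableEq α] (H : Finset (α × α × α)) (e1 e2 e3 : Finset (α × α))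
    (X Y Z : Finset α) : ℝ :=
  ∑ x0 ∈ X, ∑ x1 ∈ X, ∑ y0 ∈ Y, ∑ y1 ∈ Y, ∑ z0 ∈ Z, ∑ z1 ∈ Z,
    fQ H e1 e2 e3 x0 y0 z0 * fQ H e1 e2 e3 x0 y0 z1 * fQ H e1 e2 e3 x0 y1 z0 *
      fQ H e1 e2 e3 x0 y1 z1 * fQ H e1 e2 e3 x1 y0 z0 * fQ H e1 e2 e3 x1 y0 z1 *
      fQ H e1 e2 e3 x1 y1 z0 * fQ H e1 e2 e3 x1 y1 z1

/-- The triad `(e1, e2, e3)` on vertex classes `(X, Y, Z)` with `d(e1) = d(e2) = d(e3) = d`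
and `|X| = |Y| = |Z| = n` is `a`-quasirandom in `H`: the octahedron sum is at most
`a d¹² n⁶`. -/
def Quasirandom {α : Type*} [DecidableEq α] (a : ℝ) (H : Finset (α × α × α))
    (e1 e2 e3 : Finset (α × α)) (X Y Z : Finset α) : Prop :=
  ∀ (d : ℝ) (n : ℕ), bmDens e1 X Y = d → bmDens e2 X Z = d → bmDens e3 Y Z = d →
    X.card = n → Y.card = n → Z.card = n →
    octSum H e1 e2 e3 X Y Z ≤ a * d ^ 12 * (n : ℝ) ^ 6

/-- The `(ℓ,t,ε₂)`-equipartition `(Z, E)` is an `a`-quasirandom partition of the 3-graph `H`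
with vertex set `S`: `Σ t(P) ≤ a |S|³`, summed over non-`a`-quasirandom triads. -/
def QuasirandomPartition {α : Type*} [DecidableEq α] (a : ℝ) (H : Finset (α × α × α))
    (S : Finset α) (Z : Finset (Finset α)) (E : Finset (Finset (α × α))) : Prop :=
  ∑ e ∈ (E ×ˢ E ×ˢ E).filter fun e => ∃ Z1 ∈ Z, ∃ Z2 ∈ Z, ∃ Z3 ∈ Z,
      Z1 ≠ Z2 ∧ Z1 ≠ Z3 ∧ Z2 ≠ Z3 ∧
      e.1 ⊆ Z1 ×ˢ Z2 ∧ e.2.1 ⊆ Z1 ×ˢ Z3 ∧ e.2.2 ⊆ Z2 ×ˢ Z3 ∧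
      ¬ Quasirandom a H e.1 e.2.1 e.2.2 Z1 Z2 Z3,
    ((tri e.1 e.2.1 e.2.2).card : ℝ) ≤ a * (S.card : ℝ) ^ 3

/-- `e(i) = 2^(i+10)`. -/
def efn (i : ℕ) : ℕ := 2 ^ (i + 10)

/-- `t(1) = 2^250` and `t(i+1) = 2^(t(i)/e(i))` for `i ≥ 1`. -/
def tfn : ℕ → ℕ
  | 0 => 0
  | 1 => 2 ^ 250
  | n + 2 => 2 ^ (tfn (n + 1) / efn (n + 1))

/-- `w(1) = 1` and `w(i+1) = w*(i) = t(w(i))/e(i)` for `i ≥ 1`. -/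
def wfn : ℕ → ℕ
  | 0 => 0
  | 1 => 1
  | n + 2 => tfn (wfn (n + 1)) / efn (n + 1)

/-- `w*(s) = t(w(s))/e(s)`. -/
def wstar (s : ℕ) : ℕ := tfn (wfn s) / efn s

end

/-- sign of a bit -/
noncomputable def bsg (b : Bool) : ℝ := if b then -1 else 1
/-- sign of an element of ZMod 2 -/
noncomputable def zsg (z : ZMod 2) : ℝ := if z = 0 then 1 else -1

lemma zsg_add (a b : ZMod 2) : zsg (a + b) = zsg a * zsg b := by
  have h : ∀ a b : ZMod 2, (a = 0 ∧ b = 0 ∧ a + b = 0) ∨ (a = 0 ∧ b ≠ 0 ∧ a + b ≠ 0) ∨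
    (a ≠ 0 ∧ b = 0 ∧ a + b ≠ 0) ∨ (a ≠ 0 ∧ b ≠ 0 ∧ a + b = 0) := by decide
  rcases h a b with ⟨h1, h2, h3⟩ | ⟨h1, h2, h3⟩ | ⟨h1, h2, h3⟩ | ⟨h1, h2, h3⟩ <;>
    simp [zsg, h1, h2, h3]

lemma zsg_cases (z : ZMod 2) : zsg z = 1 ∨ zsg z = -1 := by
  unfold zsg; split_ifs <;> simp

lemma zsg_one_of_ne (z : ZMod 2) (h : z ≠ 0) : zsg z = -1 := by simp [zsg, h]

lemma char_shift {k : ℕ} (a : Fin k → ZMod 2) (t : Fin k) (ht : a t ≠ 0) (l : Fin k → ZMod 2) :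
    zsg (a ⬝ᵥ (l + Pi.single t 1)) = - zsg (a ⬝ᵥ l) := by
  rw [dotProduct_add, zsg_add, dotProduct_single, mul_one, zsg_one_of_ne _ ht, mul_neg_one]

lemma sum_zero_of_shift {G : Type*} [Fintype G] [AddGroup G] (f : G → ℝ) (e : G)
    (h : ∀ x, f (x + e) = - f x) : ∑ x, f x = 0 := by
  have h1 : ∑ l, f (l + e) = ∑ l, f l := Equiv.sum_comp (Equiv.addRight e) f
  simp only [h, Finset.sum_neg_distrib] at h1
  linarith

lemma char_sum {k : ℕ} (a : Fin k → ZMod 2) (ha : a ≠ 0) :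
    ∑ l : Fin k → ZMod 2, zsg (a ⬝ᵥ l) = 0 := by
  obtain ⟨t, ht⟩ := Function.ne_iff.mp ha
  exact sum_zero_of_shift (fun l => zsg (a ⬝ᵥ l)) (Pi.single t 1) (char_shift a t ht)

lemma exp_zsg (θ : ℝ) (z : ZMod 2) :
    Real.exp (θ * zsg z) = Real.cosh θ + zsg z * Real.sinh θ := by
  rcases zsg_cases z with h | h <;> rw [h]
  · rw [mul_one, one_mul, Real.cosh_add_sinh]
  · rw [mul_neg, mul_one, neg_one_mul, ← sub_eq_add_neg, Real.cosh_sub_sinh]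

lemma exp_sum {k : ℕ} (N : Type) [Fintype N] (l : Fin k → ZMod 2) (hl : l ≠ 0) (θ : ℝ) :
    ∑ a : N → (Fin k → ZMod 2), Real.exp (θ * ∑ p, zsg (l ⬝ᵥ a p)) =
      ((2 : ℝ) ^ k * Real.cosh θ) ^ Fintype.card N := by
  have h : ∑ v : Fin k → ZMod 2, Real.exp (θ * zsg (l ⬝ᵥ v)) = (2 : ℝ) ^ k * Real.cosh θ := by
    simp only [exp_zsg, Finset.sum_add_distrib, ← Finset.sum_mul, char_sum l hl]
    simp [ZMod.card]
  simp only [Finset.mul_sum, Real.exp_sum]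
  rw [← h]
  have := Fintype.sum_pow (f := fun v : Fin k → ZMod 2 => Real.exp (θ * zsg (l ⬝ᵥ v))) (Fintype.card N)
  rw [← Finset.card_univ, ← Finset.prod_const, Finset.prod_univ_sum]
  simp

lemma coll_card {k : ℕ} (N : Type) [Fintype N] (p p' : N) (h : p ≠ p') :
    ((Finset.univ.filter fun a : N → (Fin k → ZMod 2) => a p = a p').card : ℝ) * 2 ^ k ≤
      ((2 : ℝ) ^ k) ^ Fintype.card N := by
  have h1 : (Finset.univ.filter fun a : N → (Fin k → ZMod 2) => a p = a p').card *
     (Finset.univ : Finset (Fin k → ZMod 2)).card ≤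
      (Finset.univ : Finset (N → (Fin k → ZMod 2))).card := by
    rw [← Finset.card_product]
    apply Finset.card_le_card_of_injOn (fun q => Function.update q.1 p q.2)
    · intro q _; simp
    · rintro ⟨a, v⟩ ha ⟨b, w⟩ hb hab
      simp only [Finset.coe_product, Set.mem_prod, Finset.mem_coe, Finset.mem_filter,
        Finset.mem_univ, true_and, and_true] at ha hb hab
      have e1 : ∀ q, q ≠ p → a q = b q := by
        intro q hq
        have := congrFun hab q
        simpa [Function.update, hq] using this
      have e2 : v = w := by
        have := congrFun hab p
        simpa using this
      have e3 : a = b := by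
        funext q
        by_cases hq : q = p
        · subst hq; rw [ha, hb]; exact e1 _ (Ne.symm h)
        · exact e1 q hq
      rw [e2, e3]
  have h2 : ((Finset.univ : Finset (Fin k → ZMod 2)).card : ℝ) = 2 ^ k := by
    simp [ZMod.card]
  have h3 : ((Finset.univ : Finset (N → (Fin k → ZMod 2))).card : ℝ) = (2 ^ k) ^ Fintype.card N := by
    simp [ZMod.card]
  rw [← h3, ← h2]
  exact_mod_cast h1

theorem code_vec (k : ℕ) (N : Type) [Fintype N] (h1 : k * 1024 ≤ Fintype.card N)
    (h2 : 2 * Fintype.card N ^ 2 ≤ 2 ^ k) (hn : 1024 ≤ Fintype.card N) :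
    ∃ a : N → (Fin k → ZMod 2), Function.Injective a ∧
      ∀ l, l ≠ 0 → ∑ p, zsg (l ⬝ᵥ a p) ≤ (Fintype.card N : ℝ) / 16 := by
  set n := Fintype.card N with hnn
  by_contra! hcon
  let S : (N → (Fin k → ZMod 2)) → ℝ := fun a =>
    (∑ l ∈ Finset.univ.filter (fun l : Fin k → ZMod 2 => l ≠ 0),
      Real.exp ((1/16 : ℝ) * ∑ p, zsg (l ⬝ᵥ a p)) * Real.exp (-(n : ℝ)/256)) +
    ∑ q ∈ Finset.univ.filter (fun q : N × N => q.1 ≠ q.2), if a q.1 = a q.2 then (1 : ℝ) else 0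
  have hS : ∀ a, 1 ≤ S a := by
    intro a
    by_cases hinj : Function.Injective a
    · obtain ⟨l, hl, hl2⟩ := hcon a hinj
      have : (1:ℝ) ≤ Real.exp ((1/16 : ℝ) * ∑ p, zsg (l ⬝ᵥ a p)) * Real.exp (-(n : ℝ)/256) := by
        rw [← Real.exp_add]; apply Real.one_le_exp; linarith
      have h3 := Finset.single_le_sum (s := Finset.univ.filter (fun l : Fin k → ZMod 2 => l ≠ 0))
        (f := fun l => Real.exp ((1/16 : ℝ) * ∑ p, zsg (l ⬝ᵥ a p)) * Real.exp (-(n : ℝ)/256))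
        (fun i _ => by positivity) (a := l) (by simp [hl])
      have h4 : (0:ℝ) ≤ ∑ q ∈ Finset.univ.filter (fun q : N × N => q.1 ≠ q.2), if a q.1 = a q.2 then (1 : ℝ) else 0 :=
        Finset.sum_nonneg (fun _ _ => by split_ifs <;> norm_num)
      simp only [S]; linarith
    · unfold Function.Injective at hinj
      push Not at hinj
      obtain ⟨p, p', hp, hne⟩ := hinj
      have h3 := Finset.single_le_sum (s := Finset.univ.filter (fun q : N × N => q.1 ≠ q.2))
        (f := fun q => if a q.1 = a q.2 then (1 : ℝ) else 0)
        (fun i _ => by split_ifs <;> norm_num) (a := (p, p')) (by simp [hne])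
      have h4 : (0:ℝ) ≤ ∑ l ∈ Finset.univ.filter (fun l : Fin k → ZMod 2 => l ≠ 0),
          Real.exp ((1/16 : ℝ) * ∑ p, zsg (l ⬝ᵥ a p)) * Real.exp (-(n : ℝ)/256) :=
        Finset.sum_nonneg (fun _ _ => by positivity)
      simp only [hp, if_true] at h3
      simp only [S]; linarith
  have hcardT : ((Finset.univ : Finset (N → (Fin k → ZMod 2))).card : ℝ) = (2 ^ k) ^ n := by
    simp [ZMod.card, hnn]
  have hlow : ((2:ℝ) ^ k) ^ n ≤ ∑ a, S a := by
    rw [← hcardT, ← nsmul_one, ]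
    exact Finset.card_nsmul_le_sum _ _ _ (fun a _ => hS a)
  have hup1 : ∑ a : N → (Fin k → ZMod 2), ∑ l ∈ Finset.univ.filter (fun l : Fin k → ZMod 2 => l ≠ 0),
      Real.exp ((1/16 : ℝ) * ∑ p, zsg (l ⬝ᵥ a p)) * Real.exp (-(n : ℝ)/256) ≤
      2 ^ k * ((2 ^ k) ^ n * Real.exp (-(n:ℝ)/512)) := by
    rw [Finset.sum_comm]
    have : ∀ l ∈ Finset.univ.filter (fun l : Fin k → ZMod 2 => l ≠ 0),
      ∑ a : N → (Fin k → ZMod 2), Real.exp ((1/16 : ℝ) * ∑ p, zsg (l ⬝ᵥ a p)) * Real.exp (-(n : ℝ)/256)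
        ≤ (2 ^ k) ^ n * Real.exp (-(n:ℝ)/512) := by
      intro l hl
      simp only [Finset.mem_filter, Finset.mem_univ, true_and] at hl
      rw [← Finset.sum_mul, exp_sum N l hl, ← hnn, mul_pow, mul_assoc]
      gcongr
      have hc : Real.cosh (1/16) ^ n ≤ Real.exp ((1/16)^2/2) ^ n := by
        have := Real.cosh_le_exp_half_sq (1/16)
        have h0 := Real.cosh_pos (1/16)
        gcongr
      calc Real.cosh (1/16) ^ n * Real.exp (-(n:ℝ)/256) ≤ Real.exp ((1/16)^2/2) ^ n * Real.exp (-(n:ℝ)/256) := by gcongr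
        _ = Real.exp (-(n:ℝ)/512) := by
          rw [← Real.exp_nat_mul, ← Real.exp_add]; congr 1; ring
    refine (Finset.sum_le_card_nsmul _ _ _ this).trans ?_
    rw [nsmul_eq_mul]
    gcongr
    have : (Finset.univ.filter (fun l : Fin k → ZMod 2 => l ≠ 0)).card ≤ (Finset.univ : Finset (Fin k → ZMod 2)).card :=
      Finset.card_le_card (Finset.filter_subset _ _)
    have h2 : (Finset.univ : Finset (Fin k → ZMod 2)).card = 2 ^ k := by simp [ZMod.card]
    rw [h2] at this
    exact_mod_cast this
  have hup2 : ∑ a : N → (Fin k → ZMod 2), ∑ q ∈ Finset.univ.filter (fun q : N × N => q.1 ≠ q.2), (if a q.1 = a q.2 then (1 : ℝ) else 0)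
      ≤ (n:ℝ)^2 * ((2 ^ k) ^ n / 2 ^ k) - (n:ℝ) * ((2 ^ k) ^ n / 2 ^ k) := by
    rw [Finset.sum_comm]
    have : ∀ q ∈ Finset.univ.filter (fun q : N × N => q.1 ≠ q.2),
        ∑ a : N → (Fin k → ZMod 2), (if a q.1 = a q.2 then (1 : ℝ) else 0) ≤ (2 ^ k) ^ n / 2 ^ k := by
      intro q hq
      simp only [Finset.mem_filter, Finset.mem_univ, true_and] at hq
      rw [le_div_iff₀ (by positivity), Finset.sum_boole]
      exact coll_card N q.1 q.2 hq
    refine (Finset.sum_le_card_nsmul _ _ _ this).trans ?_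
    rw [nsmul_eq_mul, ← sub_mul]
    gcongr
    have e : (Finset.univ.filter (fun q : N × N => q.1 ≠ q.2)) = (Finset.univ : Finset N).offDiag := by
      ext ⟨x, y⟩; simp
    rw [e, Finset.offDiag_card, Finset.card_univ, ← hnn]
    rw [Nat.cast_sub (by nlinarith)]; push_cast; nlinarith
  have hup : ∑ a, S a ≤ 2 ^ k * ((2 ^ k) ^ n * Real.exp (-(n:ℝ)/512)) +
      ((n:ℝ)^2 * ((2 ^ k) ^ n / 2 ^ k) - (n:ℝ) * ((2 ^ k) ^ n / 2 ^ k)) := by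
    simp only [S, Finset.sum_add_distrib]; linarith
  have hT : (0:ℝ) < (2 ^ k) ^ n := by positivity
  have hn' : (1024:ℝ) ≤ n := by exact_mod_cast hn
  have hk' : (k:ℝ) * 1024 ≤ n := by exact_mod_cast h1
  have hA : (2:ℝ) ^ k * Real.exp (-(n:ℝ)/512) ≤ 1/2 := by
    have hl2 : Real.log 2 < 0.6931471808 := Real.log_two_lt_d9
    have hl3 : 0.6931471803 < Real.log 2 := Real.log_two_gt_d9
    have e1 : (2:ℝ)^k = Real.exp (k * Real.log 2) := by
      rw [Real.exp_nat_mul, Real.exp_log (by norm_num)]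
    have e2 : (1/2:ℝ) = Real.exp (- Real.log 2) := by
      rw [Real.exp_neg, Real.exp_log (by norm_num)]; norm_num
    rw [e1, e2, ← Real.exp_add]
    apply Real.exp_le_exp.mpr
    have : (k:ℝ) * Real.log 2 ≤ k * 1 := by
      gcongr; linarith
    linarith
  have hB : (n:ℝ)^2 / 2 ^ k ≤ 1/2 := by
    rw [div_le_iff₀ (by positivity)]
    have : (2:ℝ) * (n:ℝ)^2 ≤ 2 ^ k := by exact_mod_cast h2
    linarith
  have hC : (0:ℝ) < (n:ℝ) * ((2 ^ k) ^ n / 2 ^ k) := by positivity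
  have f1 : 2 ^ k * ((2 ^ k) ^ n * Real.exp (-(n:ℝ)/512)) ≤ (2 ^ k) ^ n * (1/2) := by
    calc _ = ((2:ℝ) ^ k) ^ n * (2 ^ k * Real.exp (-(n:ℝ)/512)) := by ring
      _ ≤ _ := by gcongr
  have f2 : (n:ℝ)^2 * ((2 ^ k) ^ n / 2 ^ k) ≤ (2 ^ k) ^ n * (1/2) := by
    calc _ = ((2:ℝ) ^ k) ^ n * ((n:ℝ)^2 / 2 ^ k) := by ring
      _ ≤ _ := by gcongr
  linarith

lemma bsg_decide (z : ZMod 2) : bsg (decide (z ≠ 0)) = zsg z := by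
  by_cases h : z = 0 <;> simp [bsg, zsg, h]

theorem code_exists (k : ℕ) (N : Finset ℕ) (h1 : k * 1024 ≤ N.card)
    (h2 : 2 * N.card ^ 2 ≤ 2 ^ k) (hn : 1024 ≤ N.card) :
    ∃ U : ℕ → ℕ → Bool,
      (∀ l < 2 ^ k, ∀ l' < 2 ^ k, l ≠ l' →
        ∑ p ∈ N, bsg (U p l) * bsg (U p l') ≤ (N.card : ℝ) / 16) ∧
      (∀ p ∈ N, ∀ p' ∈ N, p ≠ p' →
        ∑ l ∈ Finset.range (2 ^ k), bsg (U p l) * bsg (U p' l) = 0) := by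
  obtain ⟨a, hinj, hcorr⟩ := code_vec k N (by simpa using h1) (by simpa using h2) (by simpa using hn)
  have hc : Fintype.card (Fin k → ZMod 2) = 2 ^ k := by simp [ZMod.card]
  let e : (Fin k → ZMod 2) ≃ Fin (2 ^ k) := Fintype.equivFinOfCardEq hc
  let v : ℕ → (Fin k → ZMod 2) := fun l => if h : l < 2 ^ k then e.symm ⟨l, h⟩ else 0
  let b : ℕ → (Fin k → ZMod 2) := fun p => if h : p ∈ N then a ⟨p, h⟩ else 0
  refine ⟨fun p l => decide (v l ⬝ᵥ b p ≠ 0), ?_, ?_⟩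
  · intro l hl l' hl' hne
    simp only [bsg_decide, ← zsg_add, ← add_dotProduct]
    have hv : v l + v l' ≠ 0 := by
      intro h0
      have : v l = v l' := by
        have h3 : v l = - v l' := eq_neg_of_add_eq_zero_left h0
        rw [h3]; funext i; simp [ZMod.neg_eq_self_mod_two]
      simp only [v, hl, hl', dif_pos] at this
      have := e.symm.injective this
      simp at this; exact hne this
    have := hcorr _ hv
    rw [← Finset.sum_coe_sort N]
    simp only [Fintype.card_coe] at this
    refine le_trans (le_of_eq ?_) this
    apply Finset.sum_congr rfl
    intro p _
    simp [b, p.2]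
  · intro p hp p' hp' hne
    simp only [bsg_decide, ← zsg_add, ← dotProduct_add]
    have hb : b p + b p' ≠ 0 := by
      intro h0
      have : b p = b p' := by
        have h3 : b p = - b p' := eq_neg_of_add_eq_zero_left h0
        rw [h3]; funext i; simp [ZMod.neg_eq_self_mod_two]
      simp only [b, hp, hp', dif_pos] at this
      have := hinj this
      simp at this; exact hne this
    rw [← char_sum _ hb, ← Fin.sum_univ_eq_sum_range (fun l => zsg (v l ⬝ᵥ (b p + b p'))) (2 ^ k),
      ← Equiv.sum_comp e]
    apply Finset.sum_congr rfl
    intro l _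
    have : v (e l) = l := by simp [v]
    rw [this, dotProduct_comm]

/-- Hierarchical uniform labelling of a finite set `S` with `2 ^ m i` labels at level `i ≤ s`. -/
structure Lab {α : Type*} (S : Finset α) (m : ℕ → ℕ) (f : ℕ → α → ℕ) (s : ℕ) : Prop where
  mono : ∀ i < s, m i ≤ m (i + 1)
  lt : ∀ i ≤ s, ∀ x ∈ S, f i x < 2 ^ m i
  unif : ∀ i ≤ s, ∀ r < 2 ^ m i, (S.filter fun x => f i x = r).card * 2 ^ m i = S.card
  par : ∀ i < s, ∀ x ∈ S, f i x = f (i + 1) x / 2 ^ (m (i + 1) - m i)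

/-- Arithmetic conditions on the sizes. -/
structure Good (mL mR : ℕ → ℕ) (s : ℕ) : Prop where
  L0 : mL 0 = 0
  R0 : mR 0 = 0
  eq : ∀ i, 1 ≤ i → i ≤ s → mL i * 2 ^ (i + 10) = 2 ^ mR i
  big : ∀ i, 1 ≤ i → i ≤ s → 246 + 4 * i ≤ mR i
  step : ∀ i < s, mR i + 2 ≤ mR (i + 1)

/-- The colour of the pair of labels `(l, r)` at a given level. -/
noncomputable def col (mL mR : ℕ → ℕ) (U : ℕ → Finset ℕ → ℕ → ℕ → Bool) : ℕ → ℕ → ℕ → ℕ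
  | 0, _, _ => 0
  | i + 1, l, r =>
    2 * col mL mR U i (l / 2 ^ (mL (i + 1) - mL i)) (r / 2 ^ (mR (i + 1) - mR i)) +
    ((U i ((Finset.range (2 ^ (mR (i + 1) - 1))).filter fun p =>
        col mL mR U i (l / 2 ^ (mL (i + 1) - mL i)) (p / 2 ^ (mR (i + 1) - mR i - 1)) =
        col mL mR U i (l / 2 ^ (mL (i + 1) - mL i)) (r / 2 ^ (mR (i + 1) - mR i)))
      (r / 2) (l % 2 ^ (mL (i + 1) - mL i))).toNat + r) % 2

/-- The pairs at level `i + 1` lying in the colour class `c` of label `l` at level `i`. -/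
noncomputable def nset (mL mR : ℕ → ℕ) (U : ℕ → Finset ℕ → ℕ → ℕ → Bool) (i l c : ℕ) : Finset ℕ :=
  (Finset.range (2 ^ (mR (i + 1) - 1))).filter fun p =>
    col mL mR U i l (p / 2 ^ (mR (i + 1) - mR i - 1)) = c

section
variable {mL mR : ℕ → ℕ} {U : ℕ → Finset ℕ → ℕ → ℕ → Bool}

lemma col_succ_div (i l r : ℕ) : col mL mR U (i + 1) l r / 2 =
    col mL mR U i (l / 2 ^ (mL (i + 1) - mL i)) (r / 2 ^ (mR (i + 1) - mR i)) := by
  rw [col]; omega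

lemma col_eq_iff (i l r c : ℕ) : col mL mR U (i + 1) l r = c ↔
    col mL mR U i (l / 2 ^ (mL (i + 1) - mL i)) (r / 2 ^ (mR (i + 1) - mR i)) = c / 2 ∧
    ((U i (nset mL mR U i (l / 2 ^ (mL (i + 1) - mL i)) (c / 2)) (r / 2)
      (l % 2 ^ (mL (i + 1) - mL i))).toNat + r) % 2 = c % 2 := by
  constructor
  · intro h
    have h1 : col mL mR U i (l / 2 ^ (mL (i + 1) - mL i)) (r / 2 ^ (mR (i + 1) - mR i)) = c / 2 := by
      rw [← col_succ_div, h]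
    refine ⟨h1, ?_⟩
    rw [col, h1] at h
    unfold nset
    omega
  · rintro ⟨h1, h2⟩
    rw [col, h1]
    unfold nset at h2
    omega

lemma col_lt (i l r : ℕ) : col mL mR U i l r < 2 ^ i := by
  induction i generalizing l r with
  | zero => simp [col]
  | succ i ih =>
    have := ih (l / 2 ^ (mL (i + 1) - mL i)) (r / 2 ^ (mR (i + 1) - mR i))
    rw [← col_succ_div] at this
    rw [pow_succ]; omega

lemma div_pow_eq (r d : ℕ) (hd : 1 ≤ d) : r / 2 ^ d = r / 2 / 2 ^ (d - 1) := by
  rw [Nat.div_div_eq_div_mul, ← pow_succ', Nat.sub_add_cancel hd]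

lemma sign_key (b : Bool) (r c : ℕ) :
    2 * (if (b.toNat + r) % 2 = c % 2 then (1:ℝ) else 0) - 1 = bsg b * (-1) ^ (r + c) := by
  rcases Nat.even_or_odd r with hr | hr <;> rcases Nat.even_or_odd c with hc | hc <;>
  cases b <;> 
  simp [bsg, pow_add, hr.neg_one_pow, hc.neg_one_pow, Nat.add_mod] <;>
  (first | rw [Nat.even_iff] at hr | rw [Nat.odd_iff] at hr) <;>
  (first | rw [Nat.even_iff] at hc | rw [Nat.odd_iff] at hc) <;> 
  simp [hr, hc] <;> norm_num

variable {s : ℕ} {β : Type*} {R : Finset β} {rho : ℕ → β → ℕ}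

/-- signed discrepancy of a pair -/
noncomputable def dpr (R : Finset β) (f : β → ℕ) (h : β → ℝ) (c p : ℕ) : ℝ :=
  ∑ y ∈ R.filter (fun y => f y / 2 = p), (-1) ^ (f y + c) * h y

/-- weight of the colour class -/
noncomputable def Fw (C : ℕ → ℕ) (R : Finset β) (f : β → ℕ) (h : β → ℝ) (c : ℕ) : ℝ :=
  ∑ y ∈ R.filter (fun y => C (f y) = c), h y

lemma rho_pair (hg : Good mL mR s) (hR : Lab R mR rho s) {i : ℕ} (hi : i < s) {y : β} (hy : y ∈ R) :
    rho i y = rho (i + 1) y / 2 / 2 ^ (mR (i + 1) - mR i - 1) := by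
  rw [hR.par i hi y hy, div_pow_eq]
  have := hg.step i hi; omega

lemma pair_lt (hg : Good mL mR s) (hR : Lab R mR rho s) {i : ℕ} (hi : i < s) {y : β} (hy : y ∈ R) :
    rho (i + 1) y / 2 < 2 ^ (mR (i + 1) - 1) := by
  have h1 := hR.lt (i + 1) hi y hy
  have h2 := hg.step i hi
  have h3 : (2:ℕ) ^ mR (i + 1) = 2 * 2 ^ (mR (i + 1) - 1) := by
    rw [← pow_succ']; congr 1; omega
  omega

lemma fiber_nset (hg : Good mL mR s) (hR : Lab R mR rho s) {i : ℕ} (hi : i < s) (l c : ℕ)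
    (g : β → ℝ) :
    ∑ y ∈ R.filter (fun y => col mL mR U i l (rho i y) = c), g y =
    ∑ p ∈ nset mL mR U i l c, ∑ y ∈ R.filter (fun y => rho (i + 1) y / 2 = p), g y := by
  rw [← Finset.sum_fiberwise_of_maps_to (s := R.filter (fun y => col mL mR U i l (rho i y) = c))
    (t := nset mL mR U i l c) (g := fun y => rho (i + 1) y / 2)]
  · apply Finset.sum_congr rfl
    intro p hp
    apply Finset.sum_congr _ (fun _ _ => rfl)
    ext y
    simp only [Finset.mem_filter]
    simp only [nset, Finset.mem_filter] at hp
    constructor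
    · rintro ⟨⟨h1, h2⟩, h3⟩; exact ⟨h1, h3⟩
    · rintro ⟨h1, h3⟩
      refine ⟨⟨h1, ?_⟩, h3⟩
      rw [rho_pair hg hR hi h1, h3]; exact hp.2
  · intro y hy
    simp only [Finset.mem_filter] at hy
    simp only [nset, Finset.mem_filter, Finset.mem_range]
    refine ⟨pair_lt hg hR hi hy.1, ?_⟩
    rw [← rho_pair hg hR hi hy.1]; exact hy.2

lemma key_diff (hg : Good mL mR s) (hR : Lab R mR rho s) {i : ℕ} (hi : i < s) (l c : ℕ)
    (h : β → ℝ) :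
    2 * Fw (col mL mR U (i + 1) l) R (rho (i + 1)) h c -
      Fw (col mL mR U i (l / 2 ^ (mL (i + 1) - mL i))) R (rho i) h (c / 2) =
    ∑ p ∈ nset mL mR U i (l / 2 ^ (mL (i + 1) - mL i)) (c / 2),
      bsg (U i (nset mL mR U i (l / 2 ^ (mL (i + 1) - mL i)) (c / 2)) p
        (l % 2 ^ (mL (i + 1) - mL i))) * dpr R (rho (i + 1)) h c p := by
  set l' := l / 2 ^ (mL (i + 1) - mL i) with hl'
  set a := l % 2 ^ (mL (i + 1) - mL i) with ha
  set N := nset mL mR U i l' (c / 2) with hN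
  have e1 : Fw (col mL mR U (i + 1) l) R (rho (i + 1)) h c =
      ∑ y ∈ R.filter (fun y => col mL mR U i l' (rho i y) = c / 2),
        (if ((U i N (rho (i + 1) y / 2) a).toNat + rho (i + 1) y) % 2 = c % 2 then (1:ℝ) else 0) * h y := by
    unfold Fw
    simp only [ite_mul, one_mul, zero_mul]
    rw [← Finset.sum_filter, Finset.filter_filter]
    apply Finset.sum_congr _ (fun _ _ => rfl)
    apply Finset.filter_congr
    intro y hy
    rw [col_eq_iff, ← hl', ← ha, ← hN, hR.par i hi y hy]
  rw [e1]
  unfold Fw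
  rw [Finset.mul_sum, ← Finset.sum_sub_distrib]
  have e2 : ∀ y, 2 * ((if ((U i N (rho (i + 1) y / 2) a).toNat + rho (i + 1) y) % 2 = c % 2 then (1:ℝ) else 0) * h y) - h y
     = bsg (U i N (rho (i + 1) y / 2) a) * ((-1) ^ (rho (i + 1) y + c) * h y) := by
    intro y
    rw [← mul_assoc (bsg _), ← sign_key]; ring
  simp only [e2]
  rw [fiber_nset hg hR hi]
  apply Finset.sum_congr rfl
  intro p _
  unfold dpr
  rw [Finset.mul_sum]
  apply Finset.sum_congr rfl
  intro y hy
  rw [(Finset.mem_filter.mp hy).2]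

lemma dpr_split (f : β → ℕ) (h : β → ℝ) (c p : ℕ) :
    dpr R f h c p = (-1) ^ c * (∑ y ∈ R.filter (fun y => f y = 2 * p), h y -
      ∑ y ∈ R.filter (fun y => f y = 2 * p + 1), h y) := by
  unfold dpr
  have : R.filter (fun y => f y / 2 = p) = R.filter (fun y => f y = 2 * p) ∪ R.filter (fun y => f y = 2 * p + 1) := by
    ext y; simp only [Finset.mem_filter, Finset.mem_union, ← and_or_left]
    apply and_congr_right; intro _; omega
  rw [this, Finset.sum_union]
  · rw [mul_sub, sub_eq_add_neg, Finset.mul_sum, Finset.mul_sum, ← Finset.sum_neg_distrib]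
    congr 1
    · apply Finset.sum_congr rfl; intro y hy
      rw [(Finset.mem_filter.mp hy).2, pow_add, pow_mul]; simp
    · apply Finset.sum_congr rfl; intro y hy
      rw [(Finset.mem_filter.mp hy).2, pow_add, pow_add, pow_mul]; simp
  · rw [Finset.disjoint_filter]; intro y _ h1; omega

lemma unifR (hR : Lab R mR rho s) {i : ℕ} (hi : i ≤ s) {r : ℕ} (hr : r < 2 ^ mR i) :
    ((R.filter fun y => rho i y = r).card : ℝ) = (R.card : ℝ) / 2 ^ mR i := by
  rw [eq_div_iff (by positivity)]
  exact_mod_cast hR.unif i hi r hr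

lemma pair_bounds (hg : Good mL mR s) {i : ℕ} (hi : i < s) {p : ℕ} (hp : p < 2 ^ (mR (i + 1) - 1)) :
    2 * p < 2 ^ mR (i + 1) ∧ 2 * p + 1 < 2 ^ mR (i + 1) := by
  have h2 := hg.step i hi
  have h3 : (2:ℕ) ^ mR (i + 1) = 2 * 2 ^ (mR (i + 1) - 1) := by
    rw [← pow_succ']; congr 1; omega
  omega

lemma dpr_pair (hg : Good mL mR s) (hR : Lab R mR rho s) {i : ℕ} (hi : i < s) (H : ℕ → ℝ) (c p : ℕ)
    (hp : p < 2 ^ (mR (i + 1) - 1)) (h : β → ℝ) (hh : ∀ y ∈ R, h y = H (rho (i + 1) y / 2)) :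
    dpr R (rho (i + 1)) h c p = 0 := by
  obtain ⟨b1, b2⟩ := pair_bounds hg hi hp
  rw [dpr_split]
  have e1 : ∑ y ∈ R.filter (fun y => rho (i+1) y = 2 * p), h y = (R.card : ℝ) / 2 ^ mR (i+1) * H p := by
    rw [← unifR hR hi b1, ← nsmul_eq_mul, ← Finset.sum_const]
    apply Finset.sum_congr rfl; intro y hy
    obtain ⟨hy1, hy2⟩ := Finset.mem_filter.mp hy
    rw [hh y hy1, hy2]; congr 1; omega
  have e2 : ∑ y ∈ R.filter (fun y => rho (i+1) y = 2 * p + 1), h y = (R.card : ℝ) / 2 ^ mR (i+1) * H p := by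
    rw [← unifR hR hi b2, ← nsmul_eq_mul, ← Finset.sum_const]
    apply Finset.sum_congr rfl; intro y hy
    obtain ⟨hy1, hy2⟩ := Finset.mem_filter.mp hy
    rw [hh y hy1, hy2]; congr 1; omega
  rw [e1, e2]; ring

lemma nset_lt {i l c p : ℕ} (hp : p ∈ nset mL mR U i l c) : p < 2 ^ (mR (i + 1) - 1) := by
  simp only [nset, Finset.mem_filter, Finset.mem_range] at hp; exact hp.1

/-- functions constant on pairs are split evenly -/
lemma Fw_even (hg : Good mL mR s) (hR : Lab R mR rho s) {i : ℕ} (hi : i < s) (l c : ℕ) (H : ℕ → ℝ)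
    (h : β → ℝ) (hh : ∀ y ∈ R, h y = H (rho i y)) :
    2 * Fw (col mL mR U (i + 1) l) R (rho (i + 1)) h c =
      Fw (col mL mR U i (l / 2 ^ (mL (i + 1) - mL i))) R (rho i) h (c / 2) := by
  have := key_diff (U := U) hg hR hi l c h
  rw [Finset.sum_eq_zero] at this
  · linarith
  · intro p hp
    rw [dpr_pair hg hR hi (fun q => H (q / 2 ^ (mR (i + 1) - mR i - 1))) c p (nset_lt hp) h, mul_zero]
    intro y hy
    rw [hh y hy, rho_pair hg hR hi hy]

lemma Fw_one (hg : Good mL mR s) (hR : Lab R mR rho s) {i : ℕ} (hi : i ≤ s) (l c : ℕ) (hc : c < 2 ^ i) :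
    Fw (col mL mR U i l) R (rho i) (fun _ => 1) c = (R.card : ℝ) / 2 ^ i := by
  induction i generalizing l c with
  | zero =>
    have : c = 0 := by simpa using hc
    subst this
    simp [Fw, col]
  | succ i ih =>
    have h1 := Fw_even (U := U) hg hR hi l c (fun _ => 1) (fun _ => 1) (fun _ _ => rfl)
    rw [ih (by omega) _ (c / 2) (by rw [pow_succ] at hc; omega)] at h1
    rw [pow_succ]; field_simp; field_simp at h1; linarith

lemma nset_card (hg : Good mL mR s) (hR : Lab R mR rho s) (hne : R.Nonempty) {i : ℕ} (hi : i < s)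
    (l c : ℕ) (hc : c < 2 ^ i) :
    ((nset mL mR U i l c).card : ℝ) = 2 ^ mR (i + 1) / 2 ^ (i + 1) := by
  have h1 := fiber_nset (U := U) hg hR hi l c (fun _ => 1)
  have h2 := Fw_one (U := U) hg hR hi.le l c hc
  unfold Fw at h2
  rw [h2] at h1
  have h3 : ∀ p ∈ nset mL mR U i l c, ∑ y ∈ R.filter (fun y => rho (i + 1) y / 2 = p), (1:ℝ) =
      2 * ((R.card : ℝ) / 2 ^ mR (i + 1)) := by
    intro p hp
    obtain ⟨b1, b2⟩ := pair_bounds hg hi (nset_lt hp)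
    have : R.filter (fun y => rho (i+1) y / 2 = p) = R.filter (fun y => rho (i+1) y = 2 * p) ∪ R.filter (fun y => rho (i+1) y = 2 * p + 1) := by
      ext y; simp only [Finset.mem_filter, Finset.mem_union, ← and_or_left]
      apply and_congr_right; intro _; omega
    rw [this, Finset.sum_union]
    · simp only [Finset.sum_const, nsmul_eq_mul, mul_one]
      rw [unifR hR hi b1, unifR hR hi b2]; ring
    · rw [Finset.disjoint_filter]; intro y _ h1; omega
  rw [Finset.sum_congr rfl h3, Finset.sum_const, nsmul_eq_mul] at h1
  have hpos : (0:ℝ) < R.card := by exact_mod_cast hne.card_pos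
  rw [eq_div_iff (by positivity)]
  field_simp at h1
  rw [pow_succ]
  linarith

/-- iterated evenness -/
lemma Fw_even_iter (hg : Good mL mR s) (hR : Lab R mR rho s) {i : ℕ} (H : ℕ → ℝ)
    (h : β → ℝ) (hh : ∀ y ∈ R, h y = H (rho i y)) {j : ℕ} (hij : i ≤ j) (hj : j ≤ s)
    (lam : ℕ → ℕ) (hlam : ∀ t < j, lam t = lam (t + 1) / 2 ^ (mL (t + 1) - mL t)) (c : ℕ) :
    2 ^ (j - i) * Fw (col mL mR U j (lam j)) R (rho j) h c =
      Fw (col mL mR U i (lam i)) R (rho i) h (c / 2 ^ (j - i)) := by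
  induction j, hij using Nat.le_induction generalizing c with
  | base => simp
  | succ j hij ih =>
    have hr : ∃ H' : ℕ → ℝ, ∀ y ∈ R, h y = H' (rho j y) := by
      have : ∀ t, i ≤ t → t ≤ j → ∃ H' : ℕ → ℝ, ∀ y ∈ R, h y = H' (rho t y) := by
        intro t ht
        induction t, ht using Nat.le_induction with
        | base => intro _; exact ⟨H, hh⟩
        | succ t ht iht =>
          intro htj
          obtain ⟨H', hH'⟩ := iht (by omega)
          refine ⟨fun r => H' (r / 2 ^ (mR (t + 1) - mR t)), fun y hy => ?_⟩
          rw [hH' y hy, hR.par t (by omega) y hy]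
      exact this j hij le_rfl
    obtain ⟨H', hH'⟩ := hr
    have h1 := Fw_even (U := U) hg hR (i := j) (by omega) (lam (j + 1)) c H' h hH'
    rw [← hlam j (by omega)] at h1
    have h2 := ih (by omega) (fun t ht => hlam t (by omega)) (c / 2)
    rw [← h1] at h2
    have e : j + 1 - i = (j - i) + 1 := by omega
    rw [e, pow_succ, mul_assoc, h2, pow_succ', Nat.div_div_eq_div_mul]

end

/-- The code property of the choice function `U`. -/
def CodeOK (mL mR : ℕ → ℕ) (U : ℕ → Finset ℕ → ℕ → ℕ → Bool) (s : ℕ) : Prop :=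
  ∀ i < s, ∀ N : Finset ℕ, (N.card : ℝ) = 2 ^ mR (i + 1) / 2 ^ (i + 1) →
    (∀ l < 2 ^ (mL (i + 1) - mL i), ∀ l' < 2 ^ (mL (i + 1) - mL i), l ≠ l' →
        ∑ p ∈ N, bsg (U i N p l) * bsg (U i N p l') ≤ (N.card : ℝ) / 16) ∧
      (∀ p ∈ N, ∀ p' ∈ N, p ≠ p' →
        ∑ l ∈ Finset.range (2 ^ (mL (i + 1) - mL i)), bsg (U i N p l) * bsg (U i N p' l) = 0)

lemma good_mL {mL mR : ℕ → ℕ} {s : ℕ} (hg : Good mL mR s) {i : ℕ} (hi : i < s) :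
    2 * mL i ≤ mL (i + 1) := by
  rcases Nat.eq_zero_or_pos i with h0 | h0
  · subst h0; rw [hg.L0]; omega
  · have h1 := hg.eq i h0 hi.le
    have h2 := hg.eq (i + 1) (by omega) hi
    have h3 := hg.step i hi
    have h4 : 2 ^ (mR i + 2) ≤ 2 ^ mR (i + 1) := Nat.pow_le_pow_right (by norm_num) h3
    have e : 2 ^ (i + 1 + 10) = 2 ^ (i + 10) * 2 := by ring
    rw [pow_add, ← h1, ← h2, e] at h4
    have h5 : 0 < 2 ^ (i + 10) := by positivity
    by_contra hcon
    push Not at hcon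
    nlinarith

lemma code_ok_exists {mL mR : ℕ → ℕ} {s : ℕ} (hg : Good mL mR s) : ∃ U, CodeOK mL mR U s := by
  have main : ∀ i < s, ∀ N : Finset ℕ, (N.card : ℝ) = 2 ^ mR (i + 1) / 2 ^ (i + 1) →
    ∃ V : ℕ → ℕ → Bool, (∀ l < 2 ^ (mL (i + 1) - mL i), ∀ l' < 2 ^ (mL (i + 1) - mL i), l ≠ l' →
        ∑ p ∈ N, bsg (V p l) * bsg (V p l') ≤ (N.card : ℝ) / 16) ∧
      (∀ p ∈ N, ∀ p' ∈ N, p ≠ p' →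
        ∑ l ∈ Finset.range (2 ^ (mL (i + 1) - mL i)), bsg (V p l) * bsg (V p' l) = 0) := by
    intro i hi N hN
    have h1 := hg.eq (i + 1) (by omega) hi
    have h2 := hg.big (i + 1) (by omega) hi
    have h3 := good_mL hg hi
    have hN' : N.card * 2 ^ (i + 1) = 2 ^ mR (i + 1) := by
      rw [eq_div_iff (by positivity)] at hN; exact_mod_cast hN
    obtain ⟨e, he⟩ : ∃ e, mR (i + 1) = e + (i + 12) := ⟨mR (i+1) - (i + 12), by omega⟩
    have hNe : N.card = 2 ^ (e + 11) := by
      have : (2:ℕ) ^ mR (i + 1) = 2 ^ (e + 11) * 2 ^ (i + 1) := by rw [← pow_add, he]; congr 1; ring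
      rw [this] at hN'
      exact Nat.eq_of_mul_eq_mul_right (by positivity) hN'
    have hLe : mL (i + 1) = 2 ^ (e + 1) := by
      have : (2:ℕ) ^ mR (i + 1) = 2 ^ (e + 1) * 2 ^ (i + 1 + 10) := by rw [← pow_add, he]; congr 1; ring
      rw [this] at h1
      exact Nat.eq_of_mul_eq_mul_right (by positivity) h1
    have he3 : 238 ≤ e := by omega
    have hk : 2 ^ e ≤ mL (i + 1) - mL i := by rw [pow_succ] at hLe; omega
    apply code_exists
    · rw [hNe, pow_add]
      have : mL (i + 1) - mL i ≤ 2 ^ (e + 1) := by omega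
      calc _ ≤ 2 ^ (e + 1) * 1024 := by gcongr
        _ = _ := by rw [pow_succ]; ring
    · have : 2 * e + 23 ≤ 2 ^ e := by
        obtain ⟨d, rfl⟩ : ∃ d, e = d + 3 := ⟨e - 3, by omega⟩
        have := @Nat.lt_two_pow_self d
        rw [pow_add]; omega
      calc 2 * N.card ^ 2 = 2 ^ (2 * e + 23) := by rw [hNe]; ring
        _ ≤ _ := Nat.pow_le_pow_right (by norm_num) (by omega)
    · rw [hNe]
      calc 1024 = 2 ^ 10 := by norm_num
        _ ≤ _ := Nat.pow_le_pow_right (by norm_num) (by omega)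
  choose! U hU using main
  exact ⟨U, hU⟩

section
variable {mL mR : ℕ → ℕ} {U : ℕ → Finset ℕ → ℕ → ℕ → Bool}
variable {s : ℕ} {β : Type*} {R : Finset β} {rho : ℕ → β → ℕ}

lemma Fw_congr_mul (C : ℕ → ℕ) (f : β → ℕ) (h h' : β → ℝ) (c : ℕ)
    (hh : ∀ y ∈ R, C (f y) = c → h y = h' y) : Fw C R f h c = Fw C R f h' c := by
  unfold Fw
  apply Finset.sum_congr rfl
  intro y hy
  obtain ⟨h1, h2⟩ := Finset.mem_filter.mp hy
  exact hh y h1 h2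

lemma Fw_mono (C : ℕ → ℕ) (f : β → ℕ) (h h' : β → ℝ) (c : ℕ)
    (hh : ∀ y ∈ R, C (f y) = c → h y ≤ h' y) : Fw C R f h c ≤ Fw C R f h' c := by
  unfold Fw
  apply Finset.sum_le_sum
  intro y hy
  obtain ⟨h1, h2⟩ := Finset.mem_filter.mp hy
  exact hh y h1 h2

lemma corr_bound (hg : Good mL mR s) (hR : Lab R mR rho s) (hne : R.Nonempty)
    (hU : CodeOK mL mR U s) {i : ℕ} (hi : i ≤ s)
    (l1 l2 c : ℕ) (h1 : l1 < 2 ^ mL i) (h2 : l2 < 2 ^ mL i) (hl : l1 ≠ l2) (hc : c < 2 ^ i) :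
    Fw (col mL mR U i l1) R (rho i) (fun y => if col mL mR U i l2 (rho i y) = c then 1 else 0) c ≤
      17 / 32 * ((R.card : ℝ) / 2 ^ i) := by
  induction i generalizing l1 l2 c with
  | zero => rw [hg.L0] at h1 h2; omega
  | succ i ih =>
    have hc2 : c / 2 < 2 ^ i := by rw [pow_succ] at hc; omega
    have hmono := good_mL hg hi
    have hpw : (2:ℕ) ^ mL (i + 1) = 2 ^ mL i * 2 ^ (mL (i + 1) - mL i) := by
      rw [← pow_add]; congr 1; omega
    by_cases hp : l1 / 2 ^ (mL (i + 1) - mL i) = l2 / 2 ^ (mL (i + 1) - mL i)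
    · -- same parent
      set l' := l1 / 2 ^ (mL (i + 1) - mL i) with hl'
      have hmod : l1 % 2 ^ (mL (i + 1) - mL i) ≠ l2 % 2 ^ (mL (i + 1) - mL i) := by
        intro hm
        apply hl
        rw [← Nat.div_add_mod l1 (2 ^ (mL (i + 1) - mL i)), ← Nat.div_add_mod l2 (2 ^ (mL (i + 1) - mL i)), hm, ← hp]
      set h : β → ℝ := fun y => if col mL mR U (i + 1) l2 (rho (i + 1) y) = c then 1 else 0 with hh
      have hk := key_diff (U := U) hg hR hi l1 c h
      rw [← hl'] at hk
      set N := nset mL mR U i l' (c / 2) with hN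
      have hNc : (N.card : ℝ) = 2 ^ mR (i + 1) / 2 ^ (i + 1) := nset_card hg hR hne hi l' (c / 2) hc2
      have hF : Fw (col mL mR U i l') R (rho i) h (c / 2) = (R.card : ℝ) / 2 ^ (i + 1) := by
        rw [← Fw_one (U := U) hg hR hi l2 c hc]
        unfold Fw
        rw [hh, ← Finset.sum_filter, Finset.filter_filter]
        apply Finset.sum_congr _ (fun _ _ => rfl)
        apply Finset.filter_congr
        intro y hy
        constructor
        · exact fun h => h.2
        · intro h; refine ⟨?_, h⟩
          rw [col_eq_iff, ← hp] at h
          rw [hR.par i hi y hy]; exact h.1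
      have hd : ∀ p ∈ N, dpr R (rho (i + 1)) h c p =
          bsg (U i N p (l2 % 2 ^ (mL (i + 1) - mL i))) * ((R.card : ℝ) / 2 ^ mR (i + 1)) := by
        intro p hpN
        obtain ⟨b1, b2⟩ := pair_bounds hg hi (nset_lt hpN)
        have hcol : ∀ y ∈ R, rho (i + 1) y / 2 = p → h y =
            if ((U i N p (l2 % 2 ^ (mL (i + 1) - mL i))).toNat + rho (i + 1) y) % 2 = c % 2 then 1 else 0 := by
          intro y hy hyp
          rw [hh]
          simp only
          congr 1
          rw [col_eq_iff, ← hp, ← hN, hyp]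
          apply propext
          constructor
          · exact fun h => h.2
          · intro h
            refine ⟨?_, h⟩
            rw [← hR.par i hi y hy, rho_pair hg hR hi hy, hyp]
            rw [hN, nset, Finset.mem_filter] at hpN
            exact hpN.2
        rw [dpr_split]
        set b := U i N p (l2 % 2 ^ (mL (i + 1) - mL i)) with hb
        have e1 : ∑ y ∈ R.filter (fun y => rho (i+1) y = 2 * p), h y =
            (R.card : ℝ) / 2 ^ mR (i+1) * (if (b.toNat + 2 * p) % 2 = c % 2 then 1 else 0) := by
          rw [← unifR hR hi b1, ← nsmul_eq_mul, ← Finset.sum_const]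
          apply Finset.sum_congr rfl; intro y hy
          obtain ⟨hy1, hy2⟩ := Finset.mem_filter.mp hy
          rw [hcol y hy1 (by omega), hy2]
        have e2 : ∑ y ∈ R.filter (fun y => rho (i+1) y = 2 * p + 1), h y =
            (R.card : ℝ) / 2 ^ mR (i+1) * (if (b.toNat + (2 * p + 1)) % 2 = c % 2 then 1 else 0) := by
          rw [← unifR hR hi b2, ← nsmul_eq_mul, ← Finset.sum_const]
          apply Finset.sum_congr rfl; intro y hy
          obtain ⟨hy1, hy2⟩ := Finset.mem_filter.mp hy
          rw [hcol y hy1 (by omega), hy2]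
        rw [e1, e2]
        have k1 := sign_key b (2 * p) c
        have k2 := sign_key b (2 * p + 1) c
        have k3 : ((-1:ℝ)) ^ (2 * p + c) = (-1) ^ c := by rw [pow_add, pow_mul]; simp
        have k4 : ((-1:ℝ)) ^ (2 * p + 1 + c) = - (-1) ^ c := by rw [pow_add, pow_add, pow_mul]; simp
        rw [k3] at k1; rw [k4] at k2
        have k5 : ((-1:ℝ)) ^ c * (-1) ^ c = 1 := by rw [← mul_pow]; simp
        have k6 : (if (b.toNat + 2 * p) % 2 = c % 2 then (1:ℝ) else 0) - (if (b.toNat + (2 * p + 1)) % 2 = c % 2 then (1:ℝ) else 0) = bsg b * (-1) ^ c := by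
          linarith
        rw [← mul_sub, k6]
        linear_combination ((R.card : ℝ) / 2 ^ mR (i+1)) * bsg b * k5
      have hsum : ∑ p ∈ N, bsg (U i N p (l1 % 2 ^ (mL (i + 1) - mL i))) * dpr R (rho (i + 1)) h c p ≤
          (N.card : ℝ) / 16 * ((R.card : ℝ) / 2 ^ mR (i + 1)) := by
        have := (hU i hi N hNc).1 _ (Nat.mod_lt l1 (by positivity)) _ (Nat.mod_lt l2 (by positivity)) hmod
        calc _ = (∑ p ∈ N, bsg (U i N p (l1 % 2 ^ (mL (i + 1) - mL i))) * bsg (U i N p (l2 % 2 ^ (mL (i + 1) - mL i)))) * ((R.card : ℝ) / 2 ^ mR (i + 1)) := by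
              rw [Finset.sum_mul]; apply Finset.sum_congr rfl; intro p hp; rw [hd p hp]; ring
          _ ≤ _ := by gcongr
      rw [← hk, hF, hNc] at hsum
      have : (2:ℝ) ^ mR (i + 1) / 2 ^ (i + 1) / 16 * ((R.card : ℝ) / 2 ^ mR (i + 1)) = (R.card : ℝ) / 2 ^ (i + 1) / 16 := by
        field_simp
      rw [this] at hsum
      linarith
    · -- different parents
      have hlt : ∀ l, l < 2 ^ mL (i + 1) → l / 2 ^ (mL (i + 1) - mL i) < 2 ^ mL i := by
        intro l hl
        rw [Nat.div_lt_iff_lt_mul (by positivity), ← hpw]; exact hl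
      have h3 := ih (by omega) _ _ (c / 2) (hlt l1 h1) (hlt l2 h2) hp hc2
      have h4 := Fw_even (U := U) hg hR hi l1 c
        (fun r => if col mL mR U i (l2 / 2 ^ (mL (i + 1) - mL i)) r = c / 2 then 1 else 0)
        (fun y => if col mL mR U i (l2 / 2 ^ (mL (i + 1) - mL i)) (rho i y) = c / 2 then 1 else 0)
        (fun _ _ => rfl)
      rw [← h4] at h3
      have h5 : Fw (col mL mR U (i + 1) l1) R (rho (i + 1)) (fun y => if col mL mR U (i + 1) l2 (rho (i + 1) y) = c then 1 else 0) c ≤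
         Fw (col mL mR U (i + 1) l1) R (rho (i + 1)) (fun y => if col mL mR U i (l2 / 2 ^ (mL (i + 1) - mL i)) (rho i y) = c / 2 then 1 else 0) c := by
        apply Fw_mono
        intro y hy _
        by_cases hq : col mL mR U (i + 1) l2 (rho (i + 1) y) = c
        · have := ((col_eq_iff _ _ _ _).mp hq).1
          rw [← hR.par i hi y hy] at this
          simp [hq, this]
        · rw [if_neg hq]; split_ifs <;> norm_num
      rw [pow_succ]
      have : (R.card : ℝ) / (2 ^ i * 2) = (R.card : ℝ) / 2 ^ i / 2 := by field_simp
      rw [this]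
      linarith

lemma bsg_sq (b : Bool) : bsg b * bsg b = 1 := by cases b <;> simp [bsg]

lemma quad_sum (N A : Finset ℕ) (u : ℕ → ℕ → Bool) (d : ℕ → ℝ) (D : ℝ)
    (horth : ∀ p ∈ N, ∀ p' ∈ N, p ≠ p' → ∑ a ∈ A, bsg (u p a) * bsg (u p' a) = 0)
    (hd : ∀ p ∈ N, |d p| ≤ D) :
    ∑ a ∈ A, (∑ p ∈ N, bsg (u p a) * d p) ^ 2 ≤ A.card * (N.card * D ^ 2) := by
  have h1 : ∑ a ∈ A, (∑ p ∈ N, bsg (u p a) * d p) ^ 2 =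
      ∑ p ∈ N, ∑ p' ∈ N, d p * d p' * ∑ a ∈ A, bsg (u p a) * bsg (u p' a) := by
    simp only [sq, Finset.sum_mul_sum]
    simp only [Finset.mul_sum]
    rw [Finset.sum_comm]
    apply Finset.sum_congr rfl; intro p _
    rw [Finset.sum_comm]
    apply Finset.sum_congr rfl; intro p' _
    apply Finset.sum_congr rfl; intro a _
    ring
  rw [h1]
  have h2 : ∀ p ∈ N, ∑ p' ∈ N, d p * d p' * ∑ a ∈ A, bsg (u p a) * bsg (u p' a) ≤ A.card * D ^ 2 := by
    intro p hp
    rw [Finset.sum_eq_single_of_mem p hp]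
    · simp only [bsg_sq, Finset.sum_const, nsmul_eq_mul, mul_one]
      have := hd p hp
      have h3 : d p * d p ≤ D ^ 2 := by
        rw [← abs_mul_abs_self, sq]
        have h4 := abs_nonneg (d p)
        exact mul_le_mul this this h4 (h4.trans this)
      rw [mul_comm]
      gcongr
    · intro p' hp' hne
      rw [horth p hp p' hp' hne.symm, mul_zero]
  calc _ ≤ ∑ p ∈ N, (A.card * D ^ 2 : ℝ) := Finset.sum_le_sum h2
    _ = _ := by rw [Finset.sum_const, nsmul_eq_mul]; ring

lemma step_var (hg : Good mL mR s) (hR : Lab R mR rho s) (hne : R.Nonempty)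
    (hU : CodeOK mL mR U s) {i : ℕ} (hi : i < s) (l c : ℕ) (hc : c < 2 ^ (i + 1)) (h : β → ℝ)
    (h0 : ∀ y ∈ R, 0 ≤ h y) (h1 : ∀ y ∈ R, h y ≤ 1) :
    ∑ a ∈ Finset.range (2 ^ (mL (i + 1) - mL i)),
      (∑ p ∈ nset mL mR U i l (c / 2), bsg (U i (nset mL mR U i l (c / 2)) p a) *
        dpr R (rho (i + 1)) h c p) ^ 2 ≤
    2 ^ (mL (i + 1) - mL i) * ((R.card : ℝ) ^ 2 / (2 ^ (i + 1) * 2 ^ mR (i + 1))) := by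
  set N := nset mL mR U i l (c / 2) with hN
  have hc2 : c / 2 < 2 ^ i := by rw [pow_succ] at hc; omega
  have hNc : (N.card : ℝ) = 2 ^ mR (i + 1) / 2 ^ (i + 1) := nset_card hg hR hne hi l (c / 2) hc2
  have hq := quad_sum N (Finset.range (2 ^ (mL (i + 1) - mL i))) (U i N) (dpr R (rho (i + 1)) h c)
    ((R.card : ℝ) / 2 ^ mR (i + 1)) (hU i hi N hNc).2 ?_
  · refine hq.trans (le_of_eq ?_)
    rw [hNc, Finset.card_range]
    push_cast
    field_simp
  · intro p hp
    obtain ⟨b1, b2⟩ := pair_bounds hg hi (nset_lt hp)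
    rw [dpr_split, abs_mul, abs_pow, abs_neg, abs_one, one_pow, one_mul]
    have hb : ∀ r < 2 ^ mR (i + 1), 0 ≤ ∑ y ∈ R.filter (fun y => rho (i+1) y = r), h y ∧
        ∑ y ∈ R.filter (fun y => rho (i+1) y = r), h y ≤ (R.card : ℝ) / 2 ^ mR (i + 1) := by
      intro r hr
      refine ⟨Finset.sum_nonneg fun y hy => h0 y (Finset.mem_filter.mp hy).1, ?_⟩
      rw [← unifR hR hi hr]
      have := Finset.sum_le_card_nsmul (R.filter (fun y => rho (i+1) y = r)) h 1
        (fun y hy => h1 y (Finset.mem_filter.mp hy).1)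
      simpa using this
    have := hb _ b1
    have := hb _ b2
    rw [abs_le]; constructor <;> linarith

end

lemma sum_label {α : Type*} {S : Finset α} {m : ℕ → ℕ} {f : ℕ → α → ℕ} {s : ℕ} (hS : Lab S m f s)
    {i : ℕ} (hi : i ≤ s) (g : ℕ → ℝ) :
    ∑ x ∈ S, g (f i x) = (S.card : ℝ) / 2 ^ m i * ∑ l ∈ Finset.range (2 ^ m i), g l := by
  rw [← Finset.sum_fiberwise_of_maps_to (s := S) (t := Finset.range (2 ^ m i)) (g := f i)
    (fun x hx => Finset.mem_range.mpr (hS.lt i hi x hx)), Finset.mul_sum]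
  apply Finset.sum_congr rfl
  intro r hr
  rw [← unifR hS hi (Finset.mem_range.mp hr), ← nsmul_eq_mul, ← Finset.sum_const]
  apply Finset.sum_congr rfl
  intro x hx
  rw [(Finset.mem_filter.mp hx).2]

lemma sum_range_mul_aux (A K : ℕ) (g : ℕ → ℝ) :
    ∑ l ∈ Finset.range (A * K), g l =
      ∑ i ∈ Finset.range A, ∑ j ∈ Finset.range K, g (i * K + j) := by
  induction A with
  | zero => simp
  | succ A ih => rw [add_mul, one_mul, Finset.sum_range_add, ih, Finset.sum_range_succ]

section
variable {mL mR : ℕ → ℕ} {U : ℕ → Finset ℕ → ℕ → ℕ → Bool}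
variable {s : ℕ} {α β : Type*} {L : Finset α} {R : Finset β} {lam : ℕ → α → ℕ} {rho : ℕ → β → ℕ}

lemma step_sq (hg : Good mL mR s) (hL : Lab L mL lam s) (hR : Lab R mR rho s) (hne : R.Nonempty)
    (hU : CodeOK mL mR U s) {i : ℕ} (hi : i < s) (c : ℕ) (hc : c < 2 ^ (i + 1)) (h : β → ℝ)
    (h0 : ∀ y ∈ R, 0 ≤ h y) (h1 : ∀ y ∈ R, h y ≤ 1) :
    ∑ x ∈ L, (2 * Fw (col mL mR U (i + 1) (lam (i + 1) x)) R (rho (i + 1)) h c -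
      Fw (col mL mR U i (lam i x)) R (rho i) h (c / 2)) ^ 2 ≤
    (L.card : ℝ) * ((R.card : ℝ) ^ 2 / (2 ^ (i + 1) * 2 ^ mR (i + 1))) := by
  have hmono := good_mL hg hi
  have hpw : (2:ℕ) ^ mL (i + 1) = 2 ^ mL i * 2 ^ (mL (i + 1) - mL i) := by
    rw [← pow_add]; congr 1; omega
  have e1 : ∑ x ∈ L, (2 * Fw (col mL mR U (i + 1) (lam (i + 1) x)) R (rho (i + 1)) h c -
      Fw (col mL mR U i (lam i x)) R (rho i) h (c / 2)) ^ 2 =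
      ∑ x ∈ L, (fun l => (2 * Fw (col mL mR U (i + 1) l) R (rho (i + 1)) h c -
      Fw (col mL mR U i (l / 2 ^ (mL (i + 1) - mL i))) R (rho i) h (c / 2)) ^ 2) (lam (i + 1) x) := by
    apply Finset.sum_congr rfl
    intro x hx
    simp only
    rw [← hL.par i hi x hx]
  rw [e1, sum_label (i := i + 1) hL hi (fun l => (2 * Fw (col mL mR U (i + 1) l) R (rho (i + 1)) h c -
      Fw (col mL mR U i (l / 2 ^ (mL (i + 1) - mL i))) R (rho i) h (c / 2)) ^ 2)]
  simp only [key_diff hg hR hi]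
  rw [hpw, sum_range_mul_aux]
  have e2 : ∀ l' ∈ Finset.range (2 ^ mL i), ∑ a ∈ Finset.range (2 ^ (mL (i + 1) - mL i)),
      (∑ p ∈ nset mL mR U i ((l' * 2 ^ (mL (i + 1) - mL i) + a) / 2 ^ (mL (i + 1) - mL i)) (c / 2),
        bsg (U i (nset mL mR U i ((l' * 2 ^ (mL (i + 1) - mL i) + a) / 2 ^ (mL (i + 1) - mL i)) (c / 2)) p
          ((l' * 2 ^ (mL (i + 1) - mL i) + a) % 2 ^ (mL (i + 1) - mL i))) * dpr R (rho (i + 1)) h c p) ^ 2 ≤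
      2 ^ (mL (i + 1) - mL i) * ((R.card : ℝ) ^ 2 / (2 ^ (i + 1) * 2 ^ mR (i + 1))) := by
    intro l' _
    refine le_trans (le_of_eq ?_) (step_var hg hR hne hU hi l' c hc h h0 h1)
    apply Finset.sum_congr rfl
    intro a ha
    have ha' := Finset.mem_range.mp ha
    have d1 : (l' * 2 ^ (mL (i + 1) - mL i) + a) / 2 ^ (mL (i + 1) - mL i) = l' := by
      rw [mul_comm, Nat.mul_add_div (by positivity), Nat.div_eq_of_lt ha']; simp
    have d2 : (l' * 2 ^ (mL (i + 1) - mL i) + a) % 2 ^ (mL (i + 1) - mL i) = a := by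
      rw [mul_comm, Nat.mul_add_mod, Nat.mod_eq_of_lt ha']
    rw [d1, d2]
  have e3 := Finset.sum_le_sum e2
  rw [Finset.sum_const, Finset.card_range, nsmul_eq_mul] at e3
  calc _ ≤ (L.card : ℝ) / 2 ^ mL (i + 1) * (((2 ^ mL i : ℕ) : ℝ) * (2 ^ (mL (i + 1) - mL i) * ((R.card : ℝ) ^ 2 / (2 ^ (i + 1) * 2 ^ mR (i + 1))))) := by
        gcongr
    _ = _ := by
        have : (2:ℝ) ^ mL (i + 1) = 2 ^ mL i * 2 ^ (mL (i + 1) - mL i) := by exact_mod_cast hpw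
        rw [this]; push_cast; field_simp

lemma step_abs (hg : Good mL mR s) (hL : Lab L mL lam s) (hR : Lab R mR rho s) (hne : R.Nonempty)
    (hU : CodeOK mL mR U s) {i : ℕ} (hi : i < s) (c : ℕ) (hc : c < 2 ^ (i + 1)) (h : β → ℝ)
    (h0 : ∀ y ∈ R, 0 ≤ h y) (h1 : ∀ y ∈ R, h y ≤ 1) :
    ∑ x ∈ L, |2 * Fw (col mL mR U (i + 1) (lam (i + 1) x)) R (rho (i + 1)) h c -
      Fw (col mL mR U i (lam i x)) R (rho i) h (c / 2)| * 2 ^ i ≤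
    (L.card : ℝ) * R.card / (2 ^ 124 * 2 ^ i) := by
  have hsq := step_sq hg hL hR hne hU hi c hc h h0 h1
  set z : α → ℝ := fun x => 2 * Fw (col mL mR U (i + 1) (lam (i + 1) x)) R (rho (i + 1)) h c -
      Fw (col mL mR U i (lam i x)) R (rho i) h (c / 2) with hz
  change ∑ x ∈ L, |z x| * 2 ^ i ≤ _
  change ∑ x ∈ L, (z x) ^ 2 ≤ _ at hsq
  have hr : (0:ℝ) < R.card := by exact_mod_cast hne.card_pos
  obtain ⟨e, he⟩ : ∃ e, mR (i + 1) = 250 + 4 * i + e := by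
    have := hg.big (i + 1) (by omega) hi
    exact ⟨mR (i + 1) - (250 + 4 * i), by omega⟩
  have hmR : (2:ℝ) ^ 250 * 2 ^ (4 * i) ≤ 2 ^ mR (i + 1) := by
    rw [he, ← pow_add]; apply pow_le_pow_right₀ <;> [norm_num; omega]
  set τ : ℝ := R.card / (2 ^ 124 * 2 ^ i * 2 ^ i) with hτ
  have hτ0 : 0 < τ := by positivity
  have key : ∀ x ∈ L, |z x| * 2 ^ i ≤ (τ / 2) * 2 ^ i + (2 ^ i / (2 * τ)) * z x ^ 2 := by
    intro x _
    have : |z x| ≤ τ / 2 + z x ^ 2 / (2 * τ) := by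
      rw [← sub_nonneg]
      have : τ / 2 + z x ^ 2 / (2 * τ) - |z x| = (τ - |z x|) ^ 2 / (2 * τ) := by
        rw [← sq_abs (z x)]; field_simp; ring
      rw [this]; positivity
    calc _ ≤ (τ / 2 + z x ^ 2 / (2 * τ)) * 2 ^ i := by gcongr
      _ = _ := by ring
  refine (Finset.sum_le_sum key).trans ?_
  rw [Finset.sum_add_distrib, Finset.sum_const, nsmul_eq_mul, ← Finset.mul_sum]
  have t1 : (L.card : ℝ) * (τ / 2 * 2 ^ i) = (L.card : ℝ) * R.card / (2 ^ 124 * 2 ^ i) / 2 := by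
    rw [hτ]; field_simp
  have t2 : (2 ^ i / (2 * τ)) * ∑ x ∈ L, z x ^ 2 ≤ (L.card : ℝ) * R.card / (2 ^ 124 * 2 ^ i) / 2 := by
    calc _ ≤ (2 ^ i / (2 * τ)) * ((L.card : ℝ) * ((R.card : ℝ) ^ 2 / (2 ^ (i + 1) * (2 ^ 250 * 2 ^ (4 * i))))) := by
          refine mul_le_mul_of_nonneg_left (hsq.trans ?_) (by positivity)
          gcongr
      _ = (L.card : ℝ) * R.card / (2 ^ 124 * 2 ^ i) / 2 / (8 * 2 ^ i) := by
          rw [hτ, pow_succ (2:ℝ) i, show 4 * i = i * 4 by ring, pow_mul]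
          have hq : (0:ℝ) < 2 ^ i := by positivity
          generalize (2:ℝ) ^ i = q at *
          field_simp
          norm_num
          ring
      _ ≤ _ := by
          apply div_le_self (by positivity)
          have : (1:ℝ) ≤ 2 ^ i := one_le_pow₀ (by norm_num)
          linarith
  linarith

lemma var_bound (hg : Good mL mR s) (hL : Lab L mL lam s) (hR : Lab R mR rho s) (hne : R.Nonempty)
    (hU : CodeOK mL mR U s) {j : ℕ} (hj : j ≤ s) (c : ℕ) (hc : c < 2 ^ j) (h : β → ℝ)
    (h0 : ∀ y ∈ R, 0 ≤ h y) (h1 : ∀ y ∈ R, h y ≤ 1) :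
    ∑ x ∈ L, |2 ^ j * Fw (col mL mR U j (lam j x)) R (rho j) h c - ∑ y ∈ R, h y| ≤
      (L.card : ℝ) * R.card / 2 ^ 123 * (1 - 1 / 2 ^ j) := by
  induction j generalizing c with
  | zero =>
    have : c = 0 := by simpa using hc
    subst this
    simp [Fw, col]
  | succ j ih =>
    have hc2 : c / 2 < 2 ^ j := by rw [pow_succ] at hc; omega
    have a1 := ih (by omega) (c / 2) hc2
    have a2 := step_abs hg hL hR hne hU hj c hc h h0 h1
    have a3 : ∀ x ∈ L, |2 ^ (j + 1) * Fw (col mL mR U (j + 1) (lam (j + 1) x)) R (rho (j + 1)) h c - ∑ y ∈ R, h y| ≤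
      |2 ^ j * Fw (col mL mR U j (lam j x)) R (rho j) h (c / 2) - ∑ y ∈ R, h y| +
      |2 * Fw (col mL mR U (j + 1) (lam (j + 1) x)) R (rho (j + 1)) h c -
      Fw (col mL mR U j (lam j x)) R (rho j) h (c / 2)| * 2 ^ j := by
      intro x _
      set A := Fw (col mL mR U (j + 1) (lam (j + 1) x)) R (rho (j + 1)) h c
      set B := Fw (col mL mR U j (lam j x)) R (rho j) h (c / 2)
      have : (2:ℝ) ^ (j + 1) * A - ∑ y ∈ R, h y = (2 ^ j * B - ∑ y ∈ R, h y) + (2 * A - B) * 2 ^ j := by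
        rw [pow_succ]; ring
      rw [this]
      refine (abs_add_le _ _).trans (le_of_eq ?_)
      rw [abs_mul (2 * A - B), abs_of_pos (show (0:ℝ) < 2 ^ j by positivity)]
    refine (Finset.sum_le_sum a3).trans ?_
    rw [Finset.sum_add_distrib]
    refine (add_le_add a1 a2).trans (le_of_eq ?_)
    rw [pow_succ (2:ℝ) j]
    have hq : (0:ℝ) < 2 ^ j := by positivity
    generalize (2:ℝ) ^ j = q at *
    field_simp
    ring

end

/-- Approximate membership in a label class. -/
def LabMem {α : Type*} (b : ℝ) (q : Finset α) (f : α → ℕ) : Prop :=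
  ∃ r, ((q.filter fun y => f y ≠ r).card : ℝ) < b * q.card

section
variable {mL mR : ℕ → ℕ} {U : ℕ → Finset ℕ → ℕ → ℕ → Bool}
variable {s : ℕ} {α β : Type*} {L : Finset α} {R : Finset β} {lam : ℕ → α → ℕ} {rho : ℕ → β → ℕ}

lemma Fw_eq_sum (C : ℕ → ℕ) (f : β → ℕ) (h : β → ℝ) (c : ℕ) :
    Fw C R f h c = ∑ y ∈ R, (if C (f y) = c then 1 else 0) * h y := by
  unfold Fw
  rw [Finset.sum_filter]
  apply Finset.sum_congr rfl
  intro y _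
  split_ifs <;> simp

lemma nbr_lower (hg : Good mL mR s) (hL : Lab L mL lam s) (hR : Lab R mR rho s) (hne : R.Nonempty)
    (hU : CodeOK mL mR U s) {i j : ℕ} (hij : i ≤ j) (hj : j ≤ s) (c : ℕ) (hc : c < 2 ^ j)
    (P : Finset α) (hP : P ⊆ L) (x : α) (hx : x ∈ P) :
    1 / 4 * ((R.card : ℝ) / 2 ^ j) ≤ Fw (col mL mR U j (lam j x)) R (rho j)
      (fun y => if ((P.filter fun x' => lam i x' ≠ lam i x).card : ℝ) / 4 ≤
        ((P.filter fun x' => col mL mR U i (lam i x') (rho i y) ≠ c / 2 ^ (j - i)).card : ℝ)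
        then 1 else 0) c := by
  set D : ℝ := ((P.filter fun x' => lam i x' ≠ lam i x).card : ℝ) with hD
  set X : ℕ → ℝ := fun r => ((P.filter fun x' => col mL mR U i (lam i x') r ≠ c / 2 ^ (j - i)).card : ℝ) with hX
  set ci := c / 2 ^ (j - i) with hci
  have hcilt : ci < 2 ^ i := by
    rw [hci, Nat.div_lt_iff_lt_mul (by positivity), ← pow_add]
    convert hc using 2; omega
  have hi : i ≤ s := hij.trans hj
  have hev := Fw_even_iter (U := U) hg hR (i := i) (fun r => if D / 4 ≤ X r then 1 else 0)
    (fun y => if D / 4 ≤ X (rho i y) then (1:ℝ) else 0) (fun _ _ => rfl) hij hj (fun t => lam t x)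
    (fun t ht => hL.par t (by omega) x (hP hx)) c
  rw [← hci] at hev
  change _ ≤ Fw (col mL mR U j (lam j x)) R (rho j) (fun y => if D / 4 ≤ X (rho i y) then (1:ℝ) else 0) c
  set I := Fw (col mL mR U i (lam i x)) R (rho i) (fun y => if D / 4 ≤ X (rho i y) then (1:ℝ) else 0) ci with hI
  have hone := Fw_one (U := U) hg hR hi (lam i x) ci hcilt
  have hrpos : (0:ℝ) < (R.card : ℝ) / 2 ^ i := by
    have : (0:ℝ) < R.card := by exact_mod_cast hne.card_pos
    positivity
  -- first moment
  have h1 : Fw (col mL mR U i (lam i x)) R (rho i) (fun y => X (rho i y)) ci =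
      ∑ x' ∈ P, ((R.card : ℝ) / 2 ^ i - Fw (col mL mR U i (lam i x)) R (rho i)
        (fun y => if col mL mR U i (lam i x') (rho i y) = ci then 1 else 0) ci) := by
    rw [← hone]
    unfold Fw
    simp only [← Finset.sum_sub_distrib]
    rw [Finset.sum_comm]
    apply Finset.sum_congr rfl
    intro y _
    rw [hX]
    simp only [Finset.card_filter]
    push_cast
    apply Finset.sum_congr rfl
    intro x' _
    by_cases h : col mL mR U i (lam i x') (rho i y) = ci <;> simp [h]
  have h2 : D * (15 / 32 * ((R.card : ℝ) / 2 ^ i)) ≤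
      Fw (col mL mR U i (lam i x)) R (rho i) (fun y => X (rho i y)) ci := by
    rw [h1, hD, ← nsmul_eq_mul, ← Finset.sum_const, Finset.sum_filter]
    apply Finset.sum_le_sum
    intro x' hx'
    split_ifs with h
    · have := corr_bound hg hR hne hU hi (lam i x) (lam i x') ci (hL.lt i hi x (hP hx))
        (hL.lt i hi x' (hP hx')) (Ne.symm h) hcilt
      linarith
    · rw [← hone, sub_nonneg]
      apply Fw_mono
      intro y _ _
      split_ifs <;> norm_num
  have h3 : Fw (col mL mR U i (lam i x)) R (rho i) (fun y => X (rho i y)) ci ≤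
      3 / 4 * D * I + D / 4 * ((R.card : ℝ) / 2 ^ i) := by
    rw [hI, ← hone]
    unfold Fw
    rw [Finset.mul_sum, Finset.mul_sum, ← Finset.sum_add_distrib]
    apply Finset.sum_le_sum
    intro y hy
    have hXD : X (rho i y) ≤ D := by
      rw [hX, hD]
      simp only
      rw [Nat.cast_le]
      apply Finset.card_le_card
      intro x' hx'
      rw [Finset.mem_filter] at hx' ⊢
      refine ⟨hx'.1, fun he => hx'.2 ?_⟩
      rw [he]; exact (Finset.mem_filter.mp hy).2
    split_ifs with h
    · linarith
    · push Not at h; linarith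
  have h4 : 1 / 4 * ((R.card : ℝ) / 2 ^ i) ≤ I := by
    have hD0 : 0 ≤ D := by rw [hD]; positivity
    rcases hD0.eq_or_lt with h0 | h0
    · have : I = (R.card : ℝ) / 2 ^ i := by
        rw [hI, ← hone]
        apply Fw_congr_mul
        intro y _ _
        rw [if_pos]
        rw [← h0, zero_div, hX]; positivity
      rw [this]; linarith
    · have h5 : D * (7 / 32 * ((R.card : ℝ) / 2 ^ i)) ≤ D * (3 / 4 * I) := by nlinarith
      have := le_of_mul_le_mul_left h5 h0
      linarith
  rw [← hev] at h4
  have hp : (2:ℝ) ^ j = 2 ^ i * 2 ^ (j - i) := by rw [← pow_add]; congr 1; omega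
  have : (R.card : ℝ) / 2 ^ j = (R.card : ℝ) / 2 ^ i / 2 ^ (j - i) := by rw [hp]; field_simp
  rw [this, ← mul_div_assoc, div_le_iff₀ (by positivity)]
  linarith

lemma reg_pair {G' : Finset (α × β)} {δ γ : ℝ} (P P' : Finset α) (Q Q' : Finset β)
    (hreg : DeltaReg δ G' P Q) (hP : P' ⊆ P) (hQ : Q' ⊆ Q) (hγ0 : 0 < γ)
    (hδγ : δ ≤ γ / 4) (hδ : δ ≤ 1 / 2) (h1 : γ / 4 * P.card ≤ P'.card) (h2 : 1 / 2 * (Q.card : ℝ) ≤ Q'.card) :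
    γ / 16 * bmEdges G' P Q ≤ bmEdges G' P' Q' := by
  have h3 := hreg P' hP Q' hQ ((by gcongr : δ * (P.card : ℝ) ≤ γ / 4 * P.card).trans h1)
    ((by gcongr : δ * (Q.card : ℝ) ≤ 1 / 2 * Q.card).trans h2)
  rcases P.eq_empty_or_nonempty with rfl | hPn
  · simp [bmEdges]
  rcases Q.eq_empty_or_nonempty with rfl | hQn
  · simp [bmEdges]
  have p1 : (0:ℝ) < P.card := by exact_mod_cast hPn.card_pos
  have p2 : (0:ℝ) < Q.card := by exact_mod_cast hQn.card_pos
  have p3 : (0:ℝ) < P'.card := lt_of_lt_of_le (by positivity) h1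
  have p4 : (0:ℝ) < Q'.card := lt_of_lt_of_le (by positivity) h2
  unfold bmDens at h3
  rw [ge_iff_le, le_div_iff₀ (by positivity)] at h3
  refine le_trans ?_ h3
  have e0 : (0:ℝ) ≤ bmEdges G' P Q := by positivity
  calc γ / 16 * bmEdges G' P Q = 1 / 2 * (bmEdges G' P Q / (P.card * Q.card)) * ((γ / 4 * P.card) * (1 / 2 * Q.card)) := by
        field_simp; ring
    _ ≤ _ := by gcongr

lemma sum_edges_le (K : Finset (α × β)) (B : Finset (Finset α × Finset β)) (P : Finset (Finset α))
    (Q : Finset (Finset β)) (hB : ∀ b ∈ B, b.1 ∈ P ∧ b.2 ∈ Q)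
    (hP : ∀ p ∈ P, ∀ p' ∈ P, ∀ x, x ∈ p → x ∈ p' → p = p')
    (hQ : ∀ p ∈ Q, ∀ p' ∈ Q, ∀ x, x ∈ p → x ∈ p' → p = p') :
    ∑ b ∈ B, bmEdges K b.1 b.2 ≤ K.card := by
  unfold bmEdges
  rw [← Finset.card_biUnion]
  · apply Finset.card_le_card
    intro e he
    rw [Finset.mem_biUnion] at he
    obtain ⟨b, _, hb⟩ := he
    exact (Finset.mem_filter.mp hb).1
  · intro b hb b' hb' hne
    change Disjoint _ _
    rw [Finset.disjoint_left]
    intro e he he'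
    rw [Finset.mem_filter] at he he'
    apply hne
    exact Prod.ext (hP _ (hB b hb).1 _ (hB b' hb').1 _ he.2.1 he'.2.1)
      (hQ _ (hB b hb).2 _ (hB b' hb').2 _ he.2.2 he'.2.2)

end

section
variable {mL mR : ℕ → ℕ} {U : ℕ → Finset ℕ → ℕ → ℕ → Bool}
variable {s : ℕ} {α β : Type*} {L : Finset α} {R : Finset β} {lam : ℕ → α → ℕ} {rho : ℕ → β → ℕ}

lemma sum_parts_le (Q : Finset (Finset β)) (hQR : ∀ q ∈ Q, q ⊆ R)
    (hQ : ∀ p ∈ Q, ∀ p' ∈ Q, ∀ x, x ∈ p → x ∈ p' → p = p') :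
    ∑ q ∈ Q, (q.card : ℝ) ≤ R.card := by
  have : ∑ q ∈ Q, q.card ≤ R.card := by
    rw [← Finset.card_biUnion]
    · apply Finset.card_le_card
      intro e he
      rw [Finset.mem_biUnion] at he
      obtain ⟨b, hb, hb'⟩ := he
      exact hQR b hb hb'
    · intro b hb b' hb' hne
      change Disjoint _ _
      rw [Finset.disjoint_left]
      intro e he he'
      exact hne (hQ _ hb _ hb' _ he he')
  exact_mod_cast this

/-- The exceptional set is small. -/
lemma exc_small (Q : Finset (Finset β)) (hQR : ∀ q ∈ Q, q ⊆ R)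
    (hQ : ∀ p ∈ Q, ∀ p' ∈ Q, ∀ x, x ∈ p → x ∈ p' → p = p')
    (hcov : ∀ y ∈ R, ∃ q ∈ Q, y ∈ q) (b : ℝ) (hb : 0 ≤ b) (f : β → ℕ)
    (hbad : ∑ q ∈ Q.filter (fun q => ¬ LabMem b q f), (q.card : ℝ) ≤ b * R.card)
    (rq : Finset β → ℕ)
    (hrq : ∀ q, LabMem b q f → ((q.filter fun y => f y ≠ rq q).card : ℝ) < b * q.card) :
    ((R.filter fun y => ¬ ∃ q ∈ Q, LabMem b q f ∧ y ∈ q ∧ f y = rq q).card : ℝ) ≤ 2 * b * R.card := by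
  have hsub : (R.filter fun y => ¬ ∃ q ∈ Q, LabMem b q f ∧ y ∈ q ∧ f y = rq q) ⊆
      (Q.filter (fun q => ¬ LabMem b q f)).biUnion id ∪
      (Q.filter (fun q => LabMem b q f)).biUnion (fun q => q.filter fun y => f y ≠ rq q) := by
    intro y hy
    rw [Finset.mem_filter] at hy
    obtain ⟨q, hq, hyq⟩ := hcov y hy.1
    rw [Finset.mem_union, Finset.mem_biUnion, Finset.mem_biUnion]
    by_cases h : LabMem b q f
    · right
      refine ⟨q, Finset.mem_filter.mpr ⟨hq, h⟩, Finset.mem_filter.mpr ⟨hyq, fun he => ?_⟩⟩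
      exact hy.2 ⟨q, hq, h, hyq, he⟩
    · left
      exact ⟨q, Finset.mem_filter.mpr ⟨hq, h⟩, hyq⟩
  have h1 := Finset.card_le_card hsub
  have h2 := h1.trans (Finset.card_union_le _ _)
  have h3 := h2.trans (add_le_add Finset.card_biUnion_le Finset.card_biUnion_le)
  have h4 : ((R.filter fun y => ¬ ∃ q ∈ Q, LabMem b q f ∧ y ∈ q ∧ f y = rq q).card : ℝ) ≤
     ∑ q ∈ Q.filter (fun q => ¬ LabMem b q f), (q.card : ℝ) +
     ∑ q ∈ Q.filter (fun q => LabMem b q f), ((q.filter fun y => f y ≠ rq q).card : ℝ) := by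
    exact_mod_cast h3
  have h5 : ∑ q ∈ Q.filter (fun q => LabMem b q f), ((q.filter fun y => f y ≠ rq q).card : ℝ) ≤ b * R.card := by
    calc _ ≤ ∑ q ∈ Q.filter (fun q => LabMem b q f), b * (q.card : ℝ) :=
          Finset.sum_le_sum fun q hq => (hrq q (Finset.mem_filter.mp hq).2).le
      _ ≤ ∑ q ∈ Q, b * (q.card : ℝ) :=
          Finset.sum_le_sum_of_subset_of_nonneg (Finset.filter_subset _ _) (fun _ _ _ => by positivity)
      _ ≤ _ := by
          rw [← Finset.mul_sum]
          exact mul_le_mul_of_nonneg_left (sum_parts_le Q hQR hQ) hb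
  linarith

lemma col_iter (hL : Lab L mL lam s) (hR : Lab R mR rho s) {i j : ℕ} (hij : i ≤ j) (hj : j ≤ s)
    (x : α) (hx : x ∈ L) (y : β) (hy : y ∈ R) :
    col mL mR U j (lam j x) (rho j y) / 2 ^ (j - i) = col mL mR U i (lam i x) (rho i y) := by
  induction j, hij using Nat.le_induction with
  | base => simp
  | succ j hij ih =>
    rw [← ih (by omega), show j + 1 - i = (j - i) + 1 by omega, pow_succ', ← Nat.div_div_eq_div_mul,
      col_succ_div, ← hL.par j hj x hx, ← hR.par j hj y hy]

lemma G_card (hg : Good mL mR s) (hR : Lab R mR rho s)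
    {j : ℕ} (hj : j ≤ s) (c : ℕ) (hc : c < 2 ^ j) (G : Finset (α × β))
    (hG : ∀ x y, (x, y) ∈ G ↔ x ∈ L ∧ y ∈ R ∧ col mL mR U j (lam j x) (rho j y) = c) :
    (G.card : ℝ) = L.card * R.card / 2 ^ j := by
  have h1 : G = (L ×ˢ R).filter fun e => col mL mR U j (lam j e.1) (rho j e.2) = c := by
    ext ⟨x, y⟩
    simp [hG, and_assoc]
  rw [h1, Finset.card_filter]
  push_cast
  rw [Finset.sum_product]
  have h2 : ∀ x ∈ L, ∑ y ∈ R, (if col mL mR U j (lam j x) (rho j y) = c then (1:ℝ) else 0) = R.card / 2 ^ j := by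
    intro x _
    rw [← Fw_one (U := U) hg hR hj (lam j x) c hc, Fw, Finset.sum_filter]
  rw [Finset.sum_congr rfl h2, Finset.sum_const, nsmul_eq_mul]
  ring

set_option maxHeartbeats 2000000 in
lemma core (hg : Good mL mR s) (hL : Lab L mL lam s) (hR : Lab R mR rho s) (hne : R.Nonempty)
    (hU : CodeOK mL mR U s) {i j : ℕ} (hij : i ≤ j) (hj : j ≤ s) (c : ℕ) (hc : c < 2 ^ j)
    (G : Finset (α × β))
    (hG : ∀ x y, (x, y) ∈ G ↔ x ∈ L ∧ y ∈ R ∧ col mL mR U j (lam j x) (rho j y) = c)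
    (δ γ : ℝ) (hδ0 : 0 < δ) (hδγ : 128 * δ ≤ γ ^ 2) (hγ1 : 1 / 2 ^ 30 ≤ γ) (hγ2 : γ ≤ 1 / 2 ^ 9)
    (P : Finset (Finset α)) (Q : Finset (Finset β)) (hPL : ∀ p ∈ P, p ⊆ L) (hQR : ∀ q ∈ Q, q ⊆ R)
    (hP : ∀ p ∈ P, ∀ p' ∈ P, ∀ x, x ∈ p → x ∈ p' → p = p')
    (hQ : ∀ p ∈ Q, ∀ p' ∈ Q, ∀ x, x ∈ p → x ∈ p' → p = p')
    (hcov : ∀ y ∈ R, ∃ q ∈ Q, y ∈ q)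
    (G' K1 K2 : Finset (α × β)) (hK1 : ∀ e ∈ G', e ∉ G → e ∈ K1) (hK2 : ∀ e ∈ G, e ∉ G' → e ∈ K2)
    (hK : (K1.card : ℝ) + K2.card ≤ δ * G.card)
    (hreg : ∀ p ∈ P, ∀ q ∈ Q, DeltaReg δ G' p q)
    (hQi : ∑ q ∈ Q.filter (fun q => ¬ LabMem (1 / 2 ^ 9) q (rho i)), (q.card : ℝ) ≤ 1 / 2 ^ 9 * R.card) :
    ∑ p ∈ P.filter (fun p => ¬ LabMem γ p (lam i)), (p.card : ℝ) ≤ γ * L.card := by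
  by_contra hcon
  push Not at hcon
  have hγ0 : 0 < γ := lt_of_lt_of_le (by positivity) hγ1
  have hd1 : δ ≤ γ / 4 := by nlinarith
  have hd2 : δ ≤ 1 / 2 := by linarith
  have hRpos : (0:ℝ) < R.card := by exact_mod_cast hne.card_pos
  have hrq0 : ∀ q : Finset β, ∃ r, LabMem (1 / 2 ^ 9) q (rho i) →
      ((q.filter fun y => rho i y ≠ r).card : ℝ) < 1 / 2 ^ 9 * q.card := by
    intro q
    by_cases h : LabMem (1 / 2 ^ 9) q (rho i)
    · obtain ⟨r, hr⟩ := h; exact ⟨r, fun _ => hr⟩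
    · exact ⟨0, fun h' => absurd h' h⟩
  choose rq hrq using hrq0
  set R0 := R.filter fun y => ¬ ∃ q ∈ Q, LabMem (1 / 2 ^ 9) q (rho i) ∧ y ∈ q ∧ rho i y = rq q with hR0
  have hR0c := exc_small Q hQR hQ hcov (1 / 2 ^ 9) (by positivity) (rho i) hQi rq hrq
  rw [← hR0] at hR0c
  set BP := P.filter (fun p => ¬ LabMem γ p (lam i)) with hBP
  set X : ℝ := ∑ p ∈ BP, (p.card : ℝ) with hX
  set g : α → β → ℝ := fun x y => if col mL mR U j (lam j x) (rho j y) = c then 1 else 0 with hgdef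
  have hg0 : ∀ x y, 0 ≤ g x y := by intro x y; rw [hgdef]; simp only; split_ifs <;> norm_num
  set ci := c / 2 ^ (j - i) with hci
  set Qp : Finset α → Finset (Finset β) := fun p => Q.filter fun q => LabMem (1 / 2 ^ 9) q (rho i) ∧
    γ / 4 * (p.card : ℝ) ≤ ((p.filter fun x' => col mL mR U i (lam i x') (rq q) ≠ ci).card : ℝ) with hQp
  -- pointwise lower bound
  have hpt : ∀ p ∈ BP, ∀ x ∈ p, 1 / 4 * ((R.card : ℝ) / 2 ^ j) ≤
      ∑ y ∈ R, g x y * (if y ∈ R0 then 1 else 0) + ∑ q ∈ Qp p, ∑ y ∈ q, g x y := by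
    intro p hp x hx
    obtain ⟨hpP, hpb⟩ := Finset.mem_filter.mp hp
    have h1 := nbr_lower hg hL hR hne hU hij hj c hc p (hPL p hpP) x hx
    rw [Fw_eq_sum] at h1
    refine h1.trans ?_
    have hbi : ∑ q ∈ Qp p, ∑ y ∈ q, g x y = ∑ y ∈ R, if y ∈ (Qp p).biUnion id then g x y else 0 := by
      rw [← Finset.sum_filter, Finset.filter_mem_eq_inter, Finset.inter_eq_right.mpr]
      · rw [Finset.sum_biUnion]
        · rfl
        · intro q hq q' hq' hne'
          change Disjoint _ _
          rw [Finset.disjoint_left]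
          intro e he he'
          exact hne' (hQ _ (Finset.mem_filter.mp hq).1 _ (Finset.mem_filter.mp hq').1 _ he he')
      · intro y hy
        rw [Finset.mem_biUnion] at hy
        obtain ⟨q, hq, hy⟩ := hy
        exact hQR q (Finset.mem_filter.mp hq).1 hy
    rw [hbi, ← Finset.sum_add_distrib]
    apply Finset.sum_le_sum
    intro y hy
    have hD : γ * p.card ≤ ((p.filter fun x' => lam i x' ≠ lam i x).card : ℝ) := by
      by_contra hh
      push Not at hh
      exact hpb ⟨_, hh⟩
    have hgy := hg0 x y
    by_cases hyR0 : y ∈ R0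
    · rw [if_pos hyR0]
      have : (0:ℝ) ≤ (if y ∈ (Qp p).biUnion id then g x y else 0) := by split_ifs <;> simp [hgy]
      have h2 : g x y * (if ((p.filter fun x' => lam i x' ≠ lam i x).card : ℝ) / 4 ≤
        ((p.filter fun x' => col mL mR U i (lam i x') (rho i y) ≠ c / 2 ^ (j - i)).card : ℝ)
        then 1 else 0) ≤ g x y * 1 := by
        gcongr; split_ifs <;> norm_num
      linarith
    · rw [if_neg hyR0, mul_zero, zero_add]
      have hex : ∃ q ∈ Q, LabMem (1 / 2 ^ 9) q (rho i) ∧ y ∈ q ∧ rho i y = rq q := by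
        by_contra hh
        exact hyR0 (Finset.mem_filter.mpr ⟨hy, hh⟩)
      obtain ⟨q, hqQ, hql, hyq, hyr⟩ := hex
      by_cases hcond : ((p.filter fun x' => lam i x' ≠ lam i x).card : ℝ) / 4 ≤
        ((p.filter fun x' => col mL mR U i (lam i x') (rho i y) ≠ c / 2 ^ (j - i)).card : ℝ)
      · suffices hmem : y ∈ (Qp p).biUnion id by rw [if_pos hcond, mul_one, if_pos hmem]
        rw [Finset.mem_biUnion]
        refine ⟨q, Finset.mem_filter.mpr ⟨hqQ, hql, ?_⟩, hyq⟩
        rw [← hyr]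
        refine le_trans ?_ hcond
        linarith
      · rw [if_neg hcond, mul_zero]
        split_ifs <;> simp [hgy]
  -- sum up
  have hXL : ∀ F : α → ℝ, (∀ x ∈ L, 0 ≤ F x) → ∑ p ∈ BP, ∑ x ∈ p, F x ≤ ∑ x ∈ L, F x := by
    intro F hF
    have : ∑ p ∈ BP, ∑ x ∈ p, F x = ∑ x ∈ BP.biUnion id, F x := by
      rw [Finset.sum_biUnion]
      · rfl
      · intro q hq q' hq' hne'
        change Disjoint _ _
        rw [Finset.disjoint_left]
        intro e he he'
        exact hne' (hP _ (Finset.mem_filter.mp hq).1 _ (Finset.mem_filter.mp hq').1 _ he he')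
    rw [this]
    apply Finset.sum_le_sum_of_subset_of_nonneg
    · intro x hx
      rw [Finset.mem_biUnion] at hx
      obtain ⟨p, hp, hx⟩ := hx
      exact hPL p (Finset.mem_filter.mp hp).1 hx
    · intro x hx _; exact hF x hx
  have hsum := Finset.sum_le_sum fun p hp => Finset.sum_le_sum fun x hx => hpt p hp x hx
  simp only [Finset.sum_add_distrib, Finset.sum_const, nsmul_eq_mul] at hsum
  rw [← Finset.sum_mul, ← hX] at hsum
  have hq2 : (0:ℝ) < 2 ^ j := by positivity
  -- variance part
  have hvar : ∑ p ∈ BP, ∑ x ∈ p, ∑ y ∈ R, g x y * (if y ∈ R0 then 1 else 0) ≤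
      (X * R0.card + (L.card : ℝ) * R.card / 2 ^ 123) / 2 ^ j := by
    have hv := var_bound hg hL hR hne hU hj c hc (fun y => if y ∈ R0 then 1 else 0)
      (fun y _ => by split_ifs <;> norm_num) (fun y _ => by split_ifs <;> norm_num)
    have hR0s : ∑ y ∈ R, (if y ∈ R0 then (1:ℝ) else 0) = R0.card := by
      rw [← Finset.sum_filter, Finset.filter_mem_eq_inter, Finset.inter_eq_right.mpr (Finset.filter_subset _ _),
        Finset.sum_const, nsmul_eq_mul, mul_one]
    rw [hR0s] at hv
    simp only [Fw_eq_sum] at hv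
    have hv2 := (hXL _ (fun x _ => abs_nonneg _)).trans hv
    rw [le_div_iff₀ hq2, Finset.sum_mul, hX, Finset.sum_mul]
    have hv3 : (L.card : ℝ) * R.card / 2 ^ 123 * (1 - 1 / 2 ^ j) ≤ (L.card : ℝ) * R.card / 2 ^ 123 := by
      apply mul_le_of_le_one_right (by positivity)
      have : (0:ℝ) < 1 / 2 ^ j := by positivity
      linarith
    have hv4 := hv2.trans hv3
    refine le_trans ?_ (add_le_add_right hv4 _)
    rw [← Finset.sum_add_distrib]
    apply Finset.sum_le_sum
    intro p _
    rw [Finset.sum_mul, ← nsmul_eq_mul, ← Finset.sum_const, ← Finset.sum_add_distrib]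
    apply Finset.sum_le_sum
    intro x _
    have := le_abs_self (2 ^ j * (∑ y ∈ R, g x y * (if y ∈ R0 then 1 else 0)) - R0.card)
    linarith
  -- upper bound on edges in bad pairs
  set Bs : Finset (Finset α × Finset β) := (P ×ˢ Q).filter fun b => b.1 ∈ BP ∧ b.2 ∈ Qp b.1 with hBs
  have hBsmem : ∀ b ∈ Bs, b.1 ∈ P ∧ b.2 ∈ Q := by
    intro b hb
    exact Finset.mem_product.mp (Finset.mem_filter.mp hb).1
  have hedge : ∑ p ∈ BP, ∑ x ∈ p, ∑ q ∈ Qp p, ∑ y ∈ q, g x y = ∑ b ∈ Bs, (bmEdges G b.1 b.2 : ℝ) := by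
    have e1 : ∀ p ∈ P, ∀ q ∈ Q, ∑ x ∈ p, ∑ y ∈ q, g x y = bmEdges G p q := by
      intro p hp q hq
      rw [← Finset.sum_product', bmEdges, Finset.card_eq_sum_ones]
      push_cast
      rw [hgdef]
      simp only
      rw [← Finset.sum_filter]
      apply Finset.sum_congr _ (fun _ _ => rfl)
      ext ⟨x, y⟩
      simp only [Finset.mem_filter, Finset.mem_product, hG]
      constructor
      · rintro ⟨⟨a, b⟩, h⟩; exact ⟨⟨hPL p hp a, hQR q hq b, h⟩, a, b⟩
      · rintro ⟨⟨_, _, h⟩, a, b⟩; exact ⟨⟨a, b⟩, h⟩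
    have e2 : ∀ p ∈ BP, ∑ x ∈ p, ∑ q ∈ Qp p, ∑ y ∈ q, g x y = ∑ q ∈ Qp p, (bmEdges G p q : ℝ) := by
      intro p hp
      rw [Finset.sum_comm]
      apply Finset.sum_congr rfl
      intro q hq
      exact e1 p (Finset.mem_filter.mp hp).1 q (Finset.mem_filter.mp hq).1
    have e3 : ∑ b ∈ Bs, (bmEdges G b.1 b.2 : ℝ) = ∑ p ∈ P, ∑ q ∈ Q,
        if p ∈ BP ∧ q ∈ Qp p then (bmEdges G p q : ℝ) else 0 := by
      rw [hBs, Finset.sum_filter, Finset.sum_product]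
    rw [Finset.sum_congr rfl e2, e3, hBP, Finset.sum_filter, ← hBP]
    apply Finset.sum_congr rfl
    intro p hp
    by_cases hpb : LabMem γ p (lam i)
    · have : p ∉ BP := fun h => (Finset.mem_filter.mp h).2 hpb
      simp [hpb, this]
    · have : p ∈ BP := Finset.mem_filter.mpr ⟨hp, hpb⟩
      simp only [hpb, this, not_false_eq_true, if_true, true_and]
      rw [← Finset.sum_filter]
      apply Finset.sum_congr _ (fun _ _ => rfl)
      ext q
      exact ⟨fun h => Finset.mem_filter.mpr ⟨(Finset.mem_filter.mp h).1, h⟩,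
        fun h => (Finset.mem_filter.mp h).2⟩
  have hupper : γ / 16 * ∑ b ∈ Bs, (bmEdges G b.1 b.2 : ℝ) ≤ δ * G.card := by
    have hpair : ∀ b ∈ Bs, γ / 16 * (bmEdges G b.1 b.2 : ℝ) ≤ bmEdges K1 b.1 b.2 + bmEdges K2 b.1 b.2 := by
      rintro ⟨p, q⟩ hb
      obtain ⟨hpP, hqQ⟩ := hBsmem _ hb
      obtain ⟨_, hpB, hqp⟩ := Finset.mem_filter.mp hb
      obtain ⟨_, hql, hX4⟩ := Finset.mem_filter.mp hqp
      simp only at hpP hqQ hql hX4 ⊢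
      have hQ' : 1 / 2 * (q.card : ℝ) ≤ ((q.filter fun y => rho i y = rq q).card : ℝ) := by
        have h1 := hrq q hql
        have h2 : ((q.filter fun y => rho i y = rq q).card : ℝ) + ((q.filter fun y => rho i y ≠ rq q).card : ℝ) = q.card := by
          exact_mod_cast Finset.card_filter_add_card_filter_not (s := q) (fun y => rho i y = rq q)
        have : (0:ℝ) ≤ q.card := by positivity
        norm_num at h1
        linarith
      have hreg' := reg_pair p (p.filter fun x' => col mL mR U i (lam i x') (rq q) ≠ ci) q
        (q.filter fun y => rho i y = rq q) (hreg p hpP q hqQ) (Finset.filter_subset _ _)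
        (Finset.filter_subset _ _) hγ0 hd1 hd2 hX4 hQ'
      have hK1e : bmEdges G' (p.filter fun x' => col mL mR U i (lam i x') (rq q) ≠ ci)
          (q.filter fun y => rho i y = rq q) ≤ bmEdges K1 p q := by
        apply Finset.card_le_card
        rintro ⟨x, y⟩ he
        simp only [Finset.mem_filter] at he ⊢
        obtain ⟨he1, ⟨hx, hxc⟩, hy, hyr⟩ := he
        refine ⟨hK1 _ he1 ?_, hx, hy⟩
        intro hGe
        apply hxc
        rw [hG] at hGe
        obtain ⟨hxL, hyR, hcc⟩ := hGe
        rw [← hyr, hci, ← hcc]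
        exact (col_iter hL hR hij hj x hxL y hyR).symm
      have hK2e : bmEdges G p q ≤ bmEdges G' p q + bmEdges K2 p q := by
        unfold bmEdges
        refine le_trans (Finset.card_le_card ?_) (Finset.card_union_le _ _)
        intro e he
        rw [Finset.mem_filter] at he
        rw [Finset.mem_union, Finset.mem_filter, Finset.mem_filter]
        by_cases h : e ∈ G'
        · left; exact ⟨h, he.2⟩
        · right; exact ⟨hK2 e he.1 h, he.2⟩
      have hK1e' : (bmEdges G' (p.filter fun x' => col mL mR U i (lam i x') (rq q) ≠ ci)
          (q.filter fun y => rho i y = rq q) : ℝ) ≤ bmEdges K1 p q := by exact_mod_cast hK1e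
      have hK2e' : (bmEdges G p q : ℝ) ≤ bmEdges G' p q + bmEdges K2 p q := by exact_mod_cast hK2e
      have k0 : (0:ℝ) ≤ bmEdges K2 p q := by positivity
      have k1 : γ / 16 * (bmEdges G p q : ℝ) ≤ γ / 16 * (bmEdges G' p q + bmEdges K2 p q) :=
        mul_le_mul_of_nonneg_left hK2e' (by positivity)
      have k2 : γ / 16 * (bmEdges K2 p q : ℝ) ≤ 1 * bmEdges K2 p q :=
        mul_le_mul_of_nonneg_right (by linarith) k0
      rw [mul_add] at k1
      linarith
    rw [Finset.mul_sum]
    refine (Finset.sum_le_sum hpair).trans (le_trans ?_ hK)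
    rw [Finset.sum_add_distrib]
    have s1 := sum_edges_le K1 Bs P Q hBsmem hP hQ
    have s2 := sum_edges_le K2 Bs P Q hBsmem hP hQ
    have s1' : ∑ b ∈ Bs, (bmEdges K1 b.1 b.2 : ℝ) ≤ K1.card := by exact_mod_cast s1
    have s2' : ∑ b ∈ Bs, (bmEdges K2 b.1 b.2 : ℝ) ≤ K2.card := by exact_mod_cast s2
    linarith
  have hGc : (G.card : ℝ) = L.card * R.card / 2 ^ j := G_card hg hR hj c hc G hG
  rw [hedge] at hsum
  set T := ∑ b ∈ Bs, (bmEdges G b.1 b.2 : ℝ) with hT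
  rw [hGc] at hupper
  clear_value T X R0
  clear hedge hXL hpt hreg hG
  generalize (∑ p ∈ BP, ∑ x ∈ p, ∑ y ∈ R, g x y * (if y ∈ R0 then 1 else 0)) = A at hvar hsum
  have hu : (0:ℝ) < R.card / 2 ^ j := by positivity
  have hl0 : (0:ℝ) ≤ L.card := by positivity
  have hX0 : 0 < X := lt_of_le_of_lt (by positivity) hcon
  have f1 : (X * R0.card + (L.card : ℝ) * R.card / 2 ^ 123) / 2 ^ j ≤ 1 / 8 * (X * (R.card / 2 ^ j)) := by
    have f2 : X * R0.card ≤ X * (2 * (1 / 2 ^ 9) * R.card) := mul_le_mul_of_nonneg_left hR0c hX0.le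
    have f3 : (L.card : ℝ) ≤ 2 ^ 30 * X := by
      have : 1 / 2 ^ 30 * (L.card : ℝ) ≤ γ * L.card := mul_le_mul_of_nonneg_right hγ1 hl0
      norm_num at this ⊢
      linarith
    have f4 : (L.card : ℝ) * R.card ≤ 2 ^ 30 * X * R.card := mul_le_mul_of_nonneg_right f3 hRpos.le
    have f5 : X * R0.card + (L.card : ℝ) * R.card / 2 ^ 123 ≤ 1 / 8 * (X * R.card) := by
      have : 0 ≤ X * R.card := by positivity
      norm_num at *
      linarith
    calc _ ≤ 1 / 8 * (X * R.card) / 2 ^ j := by gcongr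
      _ = _ := by ring
  have f6 : 1 / 8 * (X * (R.card / 2 ^ j)) ≤ T := by linarith
  have f7 : γ / 16 * (1 / 8 * (X * (R.card / 2 ^ j))) ≤ γ / 16 * T :=
    mul_le_mul_of_nonneg_left f6 (by positivity)
  have f8 : (γ * X) * (R.card / 2 ^ j) ≤ (128 * δ * L.card) * (R.card / 2 ^ j) := by
    have : δ * ((L.card : ℝ) * R.card / 2 ^ j) = δ * L.card * (R.card / 2 ^ j) := by ring
    linarith
  have f9 := le_of_mul_le_mul_right f8 hu
  have f10 : 128 * δ * (L.card : ℝ) ≤ γ ^ 2 * L.card := mul_le_mul_of_nonneg_right hδγ hl0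
  nlinarith

end

section
variable {α : Type*}

lemma part_sum {P : Finset (Finset α)} {S : Finset α} (h : IsPartition P S) :
    ∑ p ∈ P, p.card = S.card := by
  have : S = P.biUnion id := by
    ext x
    rw [Finset.mem_biUnion]
    constructor
    · intro hx
      obtain ⟨p, hp, _⟩ := h.2.2 x hx
      exact ⟨p, hp.1, hp.2⟩
    · rintro ⟨p, hp, hx⟩
      exact h.2.1 p hp hx
  conv_rhs => rw [this]
  rw [Finset.card_biUnion]
  · rfl
  · intro p hp q hq hne
    change Disjoint _ _
    rw [Finset.disjoint_left]
    intro x hx hx'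
    exact hne ((h.2.2 x (h.2.1 p hp hx)).unique ⟨hp, hx⟩ ⟨hq, hx'⟩)

lemma part_uniq {P : Finset (Finset α)} {S : Finset α} (h : IsPartition P S) {p q : Finset α}
    (hp : p ∈ P) (hq : q ∈ P) {x : α} (hx : x ∈ p) (hx' : x ∈ q) : p = q :=
  (h.2.2 x (h.2.1 p hp hx)).unique ⟨hp, hx⟩ ⟨hq, hx'⟩

lemma part_size {P : Finset (Finset α)} {S : Finset α} (h : IsPartition P S) (he : EquitableParts P)
    {p : Finset α} (hp : p ∈ P) : P.card * p.card = S.card := by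
  rw [← part_sum h, ← smul_eq_mul, ← Finset.sum_const]
  exact Finset.sum_congr rfl fun q hq => he p hp q hq

lemma children {P Q : Finset (Finset α)} {S : Finset α} (hP : IsPartition P S) (hQ : IsPartition Q S)
    (hPe : EquitableParts P) (hQe : EquitableParts Q) (href : Refines Q P) {a b : ℕ} (hab : a ≤ b)
    (hPc : P.card = 2 ^ a) (hQc : Q.card = 2 ^ b) {p : Finset α} (hp : p ∈ P) :
    (Q.filter fun q => q ⊆ p).card = 2 ^ (b - a) := by
  have h1 : IsPartition (Q.filter fun q => q ⊆ p) p := by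
    refine ⟨fun q hq => hQ.1 q (Finset.mem_filter.mp hq).1, fun q hq => (Finset.mem_filter.mp hq).2, ?_⟩
    intro v hv
    obtain ⟨q, ⟨hq, hvq⟩, hu⟩ := hQ.2.2 v (hP.2.1 p hp hv)
    obtain ⟨p', hp', hqp'⟩ := href q hq
    have : p = p' := part_uniq hP hp hp' hv (hqp' hvq)
    subst this
    exact ⟨q, ⟨Finset.mem_filter.mpr ⟨hq, hqp'⟩, hvq⟩,
      fun q' hq' => hu q' ⟨(Finset.mem_filter.mp hq'.1).1, hq'.2⟩⟩
  obtain ⟨v, hv⟩ := hP.1 p hp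
  obtain ⟨q, ⟨hq, hvq⟩, _⟩ := h1.2.2 v hv
  have hqQ := (Finset.mem_filter.mp hq).1
  have h2 := part_size h1 (fun x hx y hy => hQe x (Finset.mem_filter.mp hx).1 y (Finset.mem_filter.mp hy).1) hq
  have h3 := part_size hP hPe hp
  have h4 := part_size hQ hQe hqQ
  rw [← h4, ← h2, hPc, hQc, ← mul_assoc] at h3
  have h5 := Nat.eq_of_mul_eq_mul_right (hQ.1 q hqQ).card_pos h3
  have h6 : (2:ℕ) ^ b = 2 ^ a * 2 ^ (b - a) := by rw [← pow_add]; congr 1; omega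
  rw [h6] at h5
  exact Nat.eq_of_mul_eq_mul_left (by positivity) h5

/-- A numbering of the parts. -/
def Numb (P : Finset (Finset α)) (n : ℕ) (l : Finset α → ℕ) : Prop :=
  (∀ p ∈ P, l p < n) ∧ ∀ p ∈ P, ∀ q ∈ P, l p = l q → p = q

lemma numb_step {P Q : Finset (Finset α)} {S : Finset α} (hP : IsPartition P S) (hQ : IsPartition Q S)
    (hPe : EquitableParts P) (hQe : EquitableParts Q) (href : Refines Q P) {a b : ℕ} (hab : a ≤ b)
    (hPc : P.card = 2 ^ a) (hQc : Q.card = 2 ^ b) (l : Finset α → ℕ) (hl : Numb P (2 ^ a) l) :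
    ∃ l' : Finset α → ℕ, Numb Q (2 ^ b) l' ∧ ∀ p ∈ P, ∀ q ∈ Q, q ⊆ p → l p = l' q / 2 ^ (b - a) := by
  have hidx : ∀ p, ∃ f : Finset α → ℕ, p ∈ P → (∀ q ∈ Q, q ⊆ p → f q < 2 ^ (b - a)) ∧
      ∀ q ∈ Q, q ⊆ p → ∀ q' ∈ Q, q' ⊆ p → f q = f q' → q = q' := by
    intro p
    by_cases hp : p ∈ P
    · have hc := children hP hQ hPe hQe href hab hPc hQc hp
      let e := Finset.equivFinOfCardEq hc
      refine ⟨fun q => if h : q ∈ Q.filter (fun q => q ⊆ p) then (e ⟨q, h⟩ : ℕ) else 0, fun _ => ⟨?_, ?_⟩⟩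
      · intro q hq hqp
        have hm : q ∈ Q.filter (fun q => q ⊆ p) := Finset.mem_filter.mpr ⟨hq, hqp⟩
        simp only [dif_pos hm]
        exact (e _).2
      · intro q hq hqp q' hq' hqp' h
        have hm : q ∈ Q.filter (fun q => q ⊆ p) := Finset.mem_filter.mpr ⟨hq, hqp⟩
        have hm' : q' ∈ Q.filter (fun q => q ⊆ p) := Finset.mem_filter.mpr ⟨hq', hqp'⟩
        simp only [dif_pos hm, dif_pos hm'] at h
        have := e.injective (Fin.ext h)
        exact congrArg Subtype.val this
    · exact ⟨fun _ => 0, fun h => absurd h hp⟩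
  choose idx hidx using hidx
  have hpar : ∀ q, ∃ p, q ∈ Q → p ∈ P ∧ q ⊆ p := by
    intro q
    by_cases hq : q ∈ Q
    · obtain ⟨p, hp, h⟩ := href q hq; exact ⟨p, fun _ => ⟨hp, h⟩⟩
    · exact ⟨∅, fun h => absurd h hq⟩
  choose par hpar using hpar
  have hK : 0 < 2 ^ (b - a) := by positivity
  have hb : (2:ℕ) ^ b = 2 ^ a * 2 ^ (b - a) := by rw [← pow_add]; congr 1; omega
  set K := 2 ^ (b - a)
  have hdiv : ∀ q ∈ Q, (l (par q) * K + idx (par q) q) / K = l (par q) := by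
    intro q hq
    have h1 := ((hidx _ (hpar q hq).1).1 q hq (hpar q hq).2)
    rw [mul_comm, Nat.mul_add_div hK, Nat.div_eq_of_lt h1, add_zero]
  refine ⟨fun q => l (par q) * K + idx (par q) q, ⟨?_, ?_⟩, ?_⟩
  · intro q hq
    have h1 := ((hidx _ (hpar q hq).1).1 q hq (hpar q hq).2)
    have h2 := hl.1 _ (hpar q hq).1
    rw [hb]
    calc _ < l (par q) * K + K := by simpa using h1
      _ = (l (par q) + 1) * K := by ring
      _ ≤ _ := Nat.mul_le_mul_right _ h2
  · intro q hq q' hq' h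
    simp only at h
    have h1 := hdiv q hq
    rw [h, hdiv q' hq'] at h1
    have h2 : par q' = par q := hl.2 _ (hpar q' hq').1 _ (hpar q hq).1 h1
    rw [h2] at h
    have h3 : idx (par q) q = idx (par q) q' := by omega
    exact (hidx _ (hpar q hq).1).2 q hq (hpar q hq).2 q' hq' (by rw [← h2]; exact (hpar q' hq').2) h3
  · intro p hp q hq hqp
    simp only
    rw [hdiv q hq]
    obtain ⟨v, hv⟩ := hQ.1 q hq
    rw [part_uniq hP hp (hpar q hq).1 (hqp hv) ((hpar q hq).2 hv)]

/-- The labelling lemma. -/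
lemma labelling (S : Finset α) (P : ℕ → Finset (Finset α)) (m : ℕ → ℕ) (s : ℕ) (hm0 : m 0 = 0)
    (hpart : ∀ i ≤ s, IsPartition (P i) S) (heq : ∀ i ≤ s, EquitableParts (P i))
    (hcard : ∀ i ≤ s, (P i).card = 2 ^ m i) (href : ∀ i < s, Refines (P (i + 1)) (P i))
    (hmono : ∀ i < s, m i ≤ m (i + 1)) :
    ∃ f : ℕ → α → ℕ, Lab S m f s ∧
      (∀ i ≤ s, ∀ p ∈ P i, ∃ r < 2 ^ m i, ∀ x ∈ S, f i x = r ↔ x ∈ p) ∧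
      (∀ i ≤ s, ∀ r < 2 ^ m i, ∃ p ∈ P i, ∀ x ∈ S, f i x = r ↔ x ∈ p) := by
  have step : ∀ i, ∀ l : Finset α → ℕ, ∃ l' : Finset α → ℕ, i < s → Numb (P i) (2 ^ m i) l →
      Numb (P (i + 1)) (2 ^ m (i + 1)) l' ∧
      ∀ p ∈ P i, ∀ q ∈ P (i + 1), q ⊆ p → l p = l' q / 2 ^ (m (i + 1) - m i) := by
    intro i l
    by_cases h : i < s ∧ Numb (P i) (2 ^ m i) l
    · obtain ⟨l', hl'⟩ := numb_step (hpart i h.1.le) (hpart (i + 1) h.1) (heq i h.1.le) (heq (i + 1) h.1)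
        (href i h.1) (hmono i h.1) (hcard i h.1.le) (hcard (i + 1) h.1) l h.2
      exact ⟨l', fun _ _ => hl'⟩
    · exact ⟨l, fun h1 h2 => absurd ⟨h1, h2⟩ h⟩
  choose F hF using step
  obtain ⟨l, hl0, hls⟩ : ∃ l : ℕ → Finset α → ℕ, (l 0 = fun _ => 0) ∧ ∀ i, l (i + 1) = F i (l i) :=
    ⟨fun n => Nat.rec (fun _ => 0) (fun i l => F i l) n, rfl, fun _ => rfl⟩
  have hN : ∀ i ≤ s, Numb (P i) (2 ^ m i) (l i) := by
    intro i
    induction i with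
    | zero =>
      intro hi
      have h1 := hcard 0 hi
      rw [hm0, pow_zero] at h1
      rw [hm0, hl0]
      refine ⟨fun _ _ => by norm_num, fun p hp q hq _ => Finset.card_le_one.mp h1.le p hp q hq⟩
    | succ i ih =>
      intro hi
      rw [hls]
      exact (hF i (l i) hi (ih (by omega))).1
  have hcompat : ∀ i < s, ∀ p ∈ P i, ∀ q ∈ P (i + 1), q ⊆ p → l i p = l (i + 1) q / 2 ^ (m (i + 1) - m i) := by
    intro i hi
    rw [hls]
    exact (hF i (l i) hi (hN i hi.le)).2
  have hprt : ∀ i x, ∃ p, i ≤ s → x ∈ S → p ∈ P i ∧ x ∈ p := by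
    intro i x
    by_cases h : i ≤ s ∧ x ∈ S
    · obtain ⟨p, hp, _⟩ := (hpart i h.1).2.2 x h.2
      exact ⟨p, fun _ _ => hp⟩
    · exact ⟨∅, fun h1 h2 => absurd ⟨h1, h2⟩ h⟩
  choose prt hprt using hprt
  have hiff : ∀ i ≤ s, ∀ p ∈ P i, ∀ x ∈ S, l i (prt i x) = l i p ↔ x ∈ p := by
    intro i hi p hp x hx
    constructor
    · intro h
      rw [← (hN i hi).2 _ (hprt i x hi hx).1 _ hp h]
      exact (hprt i x hi hx).2
    · intro h
      rw [part_uniq (hpart i hi) (hprt i x hi hx).1 hp (hprt i x hi hx).2 h]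
  have hsurj : ∀ i ≤ s, ∀ r < 2 ^ m i, ∃ p ∈ P i, l i p = r := by
    intro i hi r hr
    have h1 : (P i).image (l i) = Finset.range (2 ^ m i) := by
      apply Finset.eq_of_subset_of_card_le
      · intro t ht
        obtain ⟨p, hp, rfl⟩ := Finset.mem_image.mp ht
        exact Finset.mem_range.mpr ((hN i hi).1 p hp)
      · rw [Finset.card_range, Finset.card_image_of_injOn, hcard i hi]
        intro p hp q hq h
        exact (hN i hi).2 p hp q hq h
    have h2 : r ∈ (P i).image (l i) := by rw [h1]; exact Finset.mem_range.mpr hr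
    obtain ⟨p, hp, h⟩ := Finset.mem_image.mp h2
    exact ⟨p, hp, h⟩
  refine ⟨fun i x => l i (prt i x), ⟨hmono, ?_, ?_, ?_⟩, ?_, ?_⟩
  · intro i hi x hx
    exact (hN i hi).1 _ (hprt i x hi hx).1
  · intro i hi r hr
    obtain ⟨p, hp, rfl⟩ := hsurj i hi r hr
    have : (S.filter fun x => l i (prt i x) = l i p) = p := by
      ext x
      rw [Finset.mem_filter]
      constructor
      · rintro ⟨h1, h2⟩; exact (hiff i hi p hp x h1).mp h2
      · intro h
        have hx := (hpart i hi).2.1 p hp h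
        exact ⟨hx, (hiff i hi p hp x hx).mpr h⟩
    rw [this, mul_comm, ← hcard i hi]
    exact part_size (hpart i hi) (heq i hi) hp
  · intro i hi x hx
    have h1 := hprt i x hi.le hx
    have h2 := hprt (i + 1) x hi hx
    obtain ⟨p, hp, hqp⟩ := href i hi _ h2.1
    have : prt i x = p := part_uniq (hpart i hi.le) h1.1 hp h1.2 (hqp h2.2)
    exact hcompat i hi _ h1.1 _ h2.1 (by rw [this]; exact hqp)
  · intro i hi p hp
    exact ⟨l i p, (hN i hi).1 p hp, hiff i hi p hp⟩
  · intro i hi r hr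
    obtain ⟨p, hp, rfl⟩ := hsurj i hi r hr
    exact ⟨p, hp, hiff i hi p hp⟩

lemma Lab.par_iter {S : Finset α} {m : ℕ → ℕ} {f : ℕ → α → ℕ} {s : ℕ} (h : Lab S m f s) {i j : ℕ}
    (hij : i ≤ j) (hj : j ≤ s) : m i ≤ m j ∧ ∀ x ∈ S, f i x = f j x / 2 ^ (m j - m i) := by
  induction j, hij using Nat.le_induction with
  | base => simp
  | succ j hij ih =>
    obtain ⟨h1, h2⟩ := ih (by omega)
    have h3 := h.mono j hj
    refine ⟨h1.trans h3, fun x hx => ?_⟩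
    rw [h2 x hx, h.par j hj x hx, Nat.div_div_eq_div_mul, ← pow_add]
    congr 2; omega

lemma Lab.sub {S : Finset α} {m : ℕ → ℕ} {f : ℕ → α → ℕ} {s : ℕ} (h : Lab S m f s) (φ : ℕ → ℕ)
    (t : ℕ) (hφ : ∀ i < t, φ i ≤ φ (i + 1)) (ht : ∀ i ≤ t, φ i ≤ s) :
    Lab S (fun i => m (φ i)) (fun i => f (φ i)) t := by
  refine ⟨fun i hi => (h.par_iter (hφ i hi) (ht _ hi)).1, fun i hi => h.lt _ (ht i hi),
    fun i hi => h.unif _ (ht i hi), fun i hi => (h.par_iter (hφ i hi) (ht _ hi)).2⟩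

lemma LabMem.mono {S : Finset α} {m : ℕ → ℕ} {f : ℕ → α → ℕ} {s : ℕ} (h : Lab S m f s) {i j : ℕ}
    (hij : i ≤ j) (hj : j ≤ s) {b : ℝ} {q : Finset α} (hq : q ⊆ S) (hm : LabMem b q (f j)) :
    LabMem b q (f i) := by
  obtain ⟨r, hr⟩ := hm
  refine ⟨r / 2 ^ (m j - m i), lt_of_le_of_lt ?_ hr⟩
  rw [Nat.cast_le]
  apply Finset.card_le_card
  intro y hy
  rw [Finset.mem_filter] at hy ⊢
  refine ⟨hy.1, fun he => hy.2 ?_⟩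
  rw [(h.par_iter hij hj).2 y (hq hy.1), he]

/-- approximate membership in label form -/
lemma approx_iff [DecidableEq α] {S : Finset α} {P : Finset (Finset α)} {f : α → ℕ} {n : ℕ}
    (h1 : ∀ p ∈ P, ∃ r < n, ∀ x ∈ S, f x = r ↔ x ∈ p)
    (h2 : ∀ r < n, ∃ p ∈ P, ∀ x ∈ S, f x = r ↔ x ∈ p) (h3 : ∀ x ∈ S, f x < n)
    {b : ℝ} (hb : b ≤ 1) {q : Finset α} (hq : q ⊆ S) : ApproxMem b q P ↔ LabMem b q f := by
  have key : ∀ p r, (∀ x ∈ S, f x = r ↔ x ∈ p) → (q.filter fun y => f y ≠ r) = q \ p := by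
    intro p r h
    ext x
    rw [Finset.mem_filter, Finset.mem_sdiff]
    constructor
    · rintro ⟨ha, hb⟩; exact ⟨ha, fun hx => hb ((h x (hq ha)).mpr hx)⟩
    · rintro ⟨ha, hb⟩; exact ⟨ha, fun hx => hb ((h x (hq ha)).mp hx)⟩
  constructor
  · rintro ⟨p, hp, h⟩
    obtain ⟨r, _, hr⟩ := h1 p hp
    refine ⟨r, ?_⟩
    rw [key p r hr]; exact h
  · rintro ⟨r, h⟩
    by_cases hr : r < n
    · obtain ⟨p, hp, hpr⟩ := h2 r hr
      refine ⟨p, hp, ?_⟩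
      rw [key p r hpr] at h; exact h
    · exfalso
      rw [Finset.filter_true_of_mem] at h
      · have : (0:ℝ) ≤ q.card := by positivity
        nlinarith
      · intro x hx he
        exact hr (he ▸ h3 x (hq hx))

end

/-- The exponents of the tower sequence. -/
noncomputable def mexp : ℕ → ℕ
  | 0 => 0
  | 1 => 250
  | n + 2 => tfn (n + 1) / efn (n + 1)

lemma tfn_eq : ∀ i, 1 ≤ i → tfn i = 2 ^ mexp i
  | 0, h => by omega
  | 1, _ => by rw [tfn, mexp]
  | n + 2, _ => by rw [tfn, mexp]

lemma two_pow_ge (k : ℕ) : 4 * k ≤ 2 ^ k + 4 := by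
  induction k with
  | zero => norm_num
  | succ k ih =>
    rw [pow_succ]
    rcases Nat.lt_or_ge k 2 with h | h
    · interval_cases k <;> norm_num
    · have : 2 ^ 2 ≤ 2 ^ k := Nat.pow_le_pow_right (by norm_num) h
      omega

lemma tdiv {a j : ℕ} (h : j + 10 ≤ a) : 2 ^ a / efn j = 2 ^ (a - (j + 10)) := by
  rw [efn, Nat.pow_div h (by norm_num)]

lemma mexp_succ' (i : ℕ) (hi : 1 ≤ i) : mexp (i + 1) = 2 ^ mexp i / efn i := by
  obtain ⟨n, rfl⟩ : ∃ n, i = n + 1 := ⟨i - 1, by omega⟩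
  rw [mexp, tfn_eq _ hi]

lemma mexp_big (i : ℕ) (hi : 1 ≤ i) : 246 + 4 * i ≤ mexp i := by
  induction i, hi using Nat.le_induction with
  | base => rw [mexp]
  | succ i hi ih =>
    rw [mexp_succ' i hi, tdiv (by omega)]
    have := two_pow_ge (mexp i - (i + 10))
    omega

lemma mexp_eq (i : ℕ) (hi : 1 ≤ i) : mexp (i + 1) * 2 ^ (i + 10) = 2 ^ mexp i := by
  have h := mexp_big i hi
  rw [mexp_succ' i hi, tdiv (by omega), ← pow_add]
  congr 1; omega

lemma mexp_step (i : ℕ) : mexp i + 2 ≤ mexp (i + 1) := by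
  rcases Nat.eq_zero_or_pos i with rfl | hi
  · rw [mexp, mexp]; norm_num
  · have h := mexp_big i hi
    rw [mexp_succ' i hi, tdiv (by omega)]
    have := two_pow_ge (mexp i - (i + 10))
    omega

lemma mexp_lt {i k : ℕ} (h : i < k) : mexp i + 2 ≤ mexp k := by
  induction k, h using Nat.le_induction with
  | base => exact mexp_step i
  | succ k _ ih => have := mexp_step k; omega

lemma wfn_succ (j : ℕ) (hj : 1 ≤ j) : wfn (j + 1) = wstar j := by
  obtain ⟨n, rfl⟩ : ∃ n, j = n + 1 := ⟨j - 1, by omega⟩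
  rw [wfn, wstar]

lemma wstar_zero : wstar 0 = 0 := by
  rw [wstar, wfn, tfn, Nat.zero_div]

lemma w_aux (j : ℕ) (hj : 1 ≤ j) : j ≤ wfn j := by
  induction j, hj using Nat.le_induction with
  | base => rw [wfn]
  | succ j hj ih =>
    rw [wfn_succ j hj, wstar, tfn_eq _ (by omega)]
    have h := mexp_big (wfn j) (by omega)
    rw [tdiv (by omega)]
    have := two_pow_ge (mexp (wfn j) - (j + 10))
    omega

lemma wstar_eq (j : ℕ) (hj : 1 ≤ j) : wstar j * 2 ^ (j + 10) = 2 ^ mexp (wfn j) := by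
  have h0 := w_aux j hj
  have h := mexp_big (wfn j) (by omega)
  rw [wstar, tfn_eq _ (by omega), tdiv (by omega), ← pow_add]
  congr 1; omega

lemma w_lt_wstar (j : ℕ) (hj : 1 ≤ j) : wfn j < wstar j := by
  have h0 := w_aux j hj
  have h := mexp_big (wfn j) (by omega)
  rw [wstar, tfn_eq _ (by omega), tdiv (by omega)]
  have := two_pow_ge (mexp (wfn j) - (j + 10))
  omega

lemma w_step (j : ℕ) : wfn j < wfn (j + 1) := by
  rcases Nat.eq_zero_or_pos j with rfl | hj
  · rw [wfn, wfn]; norm_num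
  · rw [wfn_succ j hj]; exact w_lt_wstar j hj

lemma wstar_step (j : ℕ) : wstar j ≤ wstar (j + 1) := by
  rcases Nat.eq_zero_or_pos j with rfl | hj
  · rw [wstar_zero]; omega
  · rw [← wfn_succ j hj]; exact (w_lt_wstar (j + 1) (by omega)).le

lemma wstar_mono : Monotone wstar := monotone_nat_of_le_succ wstar_step

lemma wfn_mono : Monotone wfn := monotone_nat_of_le_succ fun j => (w_step j).le

lemma w_choose (s i : ℕ) (hi : 1 ≤ i) (hs : i ≤ wfn s) : ∃ j, 1 ≤ j ∧ j ≤ s ∧ wfn j ≤ i ∧ i ≤ wstar j := by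
  induction s with
  | zero => rw [wfn] at hs; omega
  | succ s ih =>
    by_cases h1 : i ≤ wfn s
    · obtain ⟨j, a, b, c⟩ := ih h1; exact ⟨j, a, by omega, c⟩
    · rcases Nat.eq_zero_or_pos s with rfl | hs0
      · have := w_lt_wstar 1 le_rfl
        have h2 : wfn 1 = 1 := by rw [wfn]
        refine ⟨1, le_rfl, by omega, by omega, ?_⟩
        rw [zero_add] at hs
        omega
      · rw [wfn_succ s hs0] at hs
        exact ⟨s, hs0, by omega, by omega, hs⟩

/-- Level shift for the first class. -/
def phi (i : ℕ) : ℕ := if i = 0 then 0 else i + 1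

lemma good_one (s : ℕ) : Good (fun i => mexp (phi i)) mexp s := by
  refine ⟨?_, by rw [mexp], ?_, fun i hi _ => mexp_big i hi, fun i _ => mexp_step i⟩
  · simp only [phi, if_true]; rw [mexp]
  · intro i hi _
    simp only [phi, if_neg (by omega : ¬ i = 0)]
    exact mexp_eq i hi

lemma good_two (s : ℕ) : Good wstar (fun j => mexp (wfn j)) s := by
  refine ⟨wstar_zero, ?_, fun i hi _ => wstar_eq i hi, ?_, fun i _ => mexp_lt (w_step i)⟩
  · simp only [wfn]; rw [mexp]
  · intro i hi _
    have h0 := w_aux i hi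
    have := mexp_big (wfn i) (by omega)
    omega

section
variable {α : Type*}

lemma partsIn_partition [DecidableEq α] {Z : Finset (Finset α)} {S V : Finset α} (h : IsPartition Z S) (hV : V ⊆ S)
    (hc : ∀ z ∈ Z, ∀ v ∈ z, v ∈ V → z ⊆ V) : IsPartition (partsIn Z V) V := by
  refine ⟨fun p hp => h.1 p (Finset.mem_filter.mp hp).1, fun p hp => (Finset.mem_filter.mp hp).2, ?_⟩
  intro v hv
  obtain ⟨p, ⟨hp, hvp⟩, hu⟩ := h.2.2 v (hV hv)
  refine ⟨p, ⟨Finset.mem_filter.mpr ⟨hp, hc p hp v hvp hv⟩, hvp⟩, ?_⟩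
  rintro q ⟨hq, hvq⟩
  exact hu q ⟨(Finset.mem_filter.mp hq).1, hvq⟩

lemma closure3 [DecidableEq α] {Z : Finset (Finset α)} {V1 V2 V3 : Finset α}
    (hd12 : Disjoint V1 V2) (hd13 : Disjoint V1 V3) (hd23 : Disjoint V2 V3)
    (hr : Refines Z {V1, V2, V3}) :
    (∀ z ∈ Z, ∀ v ∈ z, v ∈ V1 → z ⊆ V1) ∧ (∀ z ∈ Z, ∀ v ∈ z, v ∈ V2 → z ⊆ V2) ∧
    (∀ z ∈ Z, ∀ v ∈ z, v ∈ V3 → z ⊆ V3) := by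
  rw [Finset.disjoint_left] at hd12 hd13 hd23
  refine ⟨?_, ?_, ?_⟩ <;>
  · intro z hz v hv hvV
    obtain ⟨W, hW, hzW⟩ := hr z hz
    simp only [Finset.mem_insert, Finset.mem_singleton] at hW
    have := hzW hv
    rcases hW with rfl | rfl | rfl
    · first
        | exact hzW
        | exact absurd hvV (hd12 this)
        | exact absurd hvV (hd13 this)
    · first
        | exact hzW
        | exact absurd this (hd12 hvV)
        | exact absurd hvV (hd23 this)
    · first
        | exact hzW
        | exact absurd this (hd13 hvV)
        | exact absurd this (hd23 hvV)

lemma vert_lab [DecidableEq α] (V : Finset α) (M : ℕ) (hM : 1 ≤ M) (Vp : ℕ → Finset (Finset α))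
    (hpart : ∀ i, 1 ≤ i → i ≤ M → IsPartition (partsIn (Vp i) V) V)
    (hequi : ∀ i, 1 ≤ i → i ≤ M → EquitableParts (Vp i))
    (href : ∀ i, 1 ≤ i → i < M → Refines (Vp (i + 1)) (Vp i))
    (hcl : ∀ i, 1 ≤ i → i ≤ M → ∀ z ∈ Vp i, ∀ v ∈ z, v ∈ V → z ⊆ V)
    (hcount : ∀ i, 1 ≤ i → i ≤ M → (partsIn (Vp i) V).card = tfn i) :
    V.Nonempty ∧ ∃ f : ℕ → α → ℕ, Lab V mexp f M ∧
      ∀ i, 1 ≤ i → i ≤ M → ∀ b : ℝ, b ≤ 1 → ∀ q ⊆ V, (ApproxMem b q (partsIn (Vp i) V) ↔ LabMem b q (f i)) := by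
  have hne : V.Nonempty := by
    have h1 := hcount 1 le_rfl hM
    have h2 : 0 < (partsIn (Vp 1) V).card := by rw [h1, tfn_eq 1 le_rfl]; positivity
    obtain ⟨p, hp⟩ := Finset.card_pos.mp h2
    exact ((hpart 1 le_rfl hM).1 p hp).mono ((hpart 1 le_rfl hM).2.1 p hp)
  refine ⟨hne, ?_⟩
  obtain ⟨f, hf, h1, h2⟩ := labelling V (fun i => if i = 0 then {V} else partsIn (Vp i) V) mexp M (by rw [mexp])
    (by
      intro i hi
      rcases Nat.eq_zero_or_pos i with rfl | h
      · simp only [if_true]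
        refine ⟨by simpa using hne, by simp, ?_⟩
        intro v hv
        refine ⟨V, ⟨by simp, hv⟩, ?_⟩
        rintro y ⟨hy, _⟩
        simpa using hy
      · simp only [if_neg (by omega : ¬ i = 0)]
        exact hpart i h hi)
    (by
      intro i hi
      rcases Nat.eq_zero_or_pos i with rfl | h
      · simp only [if_true]
        intro p hp q hq
        rw [Finset.mem_singleton] at hp hq
        rw [hp, hq]
      · simp only [if_neg (by omega : ¬ i = 0)]
        intro p hp q hq
        exact hequi i h hi p (Finset.mem_filter.mp hp).1 q (Finset.mem_filter.mp hq).1)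
    (by
      intro i hi
      rcases Nat.eq_zero_or_pos i with rfl | h
      · simp only [if_true]
        rw [mexp]; simp
      · simp only [if_neg (by omega : ¬ i = 0)]
        rw [hcount i h hi, tfn_eq i h])
    (by
      intro i hi
      rcases Nat.eq_zero_or_pos i with rfl | h
      · simp only [if_true, zero_add, if_neg one_ne_zero]
        intro q hq
        exact ⟨V, by simp, (Finset.mem_filter.mp hq).2⟩
      · simp only [if_neg (by omega : ¬ i = 0), if_neg (by omega : ¬ i + 1 = 0)]
        intro q hq
        obtain ⟨p, hp, hqp⟩ := href i h hi q (Finset.mem_filter.mp hq).1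
        obtain ⟨v, hv⟩ := (hpart (i + 1) (by omega) hi).1 q hq
        have hvV := (Finset.mem_filter.mp hq).2 hv
        exact ⟨p, Finset.mem_filter.mpr ⟨hp, hcl i h hi.le p hp v (hqp hv) hvV⟩, hqp⟩)
    (fun i _ => by have := mexp_step i; omega)
  refine ⟨f, hf, ?_⟩
  intro i hi hiM b hb q hq
  have h1' := h1 i hiM
  have h2' := h2 i hiM
  simp only [if_neg (by omega : ¬ i = 0)] at h1' h2'
  exact approx_iff h1' h2' (hf.lt i hiM) hb hq

lemma graphs_cover [DecidableEq α] {Z : Finset (Finset α)} {E : Finset (Finset (α × α))} {S V1 V2 : Finset α}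
    (h : Is2Partition Z E S) (hd : Disjoint V1 V2) (hZ1 : IsPartition (partsIn Z V1) V1)
    (hZ2 : IsPartition (partsIn Z V2) V2) : ∀ e ∈ V1 ×ˢ V2, ∃ g ∈ graphsIn E V1 V2, e ∈ g := by
  rintro ⟨x, y⟩ he
  rw [Finset.mem_product] at he
  obtain ⟨p, ⟨hp, hxp⟩, _⟩ := hZ1.2.2 x he.1
  obtain ⟨q, ⟨hq, hyq⟩, _⟩ := hZ2.2.2 y he.2
  have hp' := Finset.mem_filter.mp hp
  have hq' := Finset.mem_filter.mp hq
  have hpq : p ≠ q := by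
    rintro rfl
    exact Finset.disjoint_left.mp hd (hp'.2 hxp) (hq'.2 hxp)
  obtain ⟨g, hg, hgs, hm⟩ := h.2.2.2 p hp'.1 q hq'.1 hpq (x, y) (Finset.mem_product.mpr ⟨hxp, hyq⟩)
  exact ⟨g, Finset.mem_filter.mpr ⟨hg, hgs.trans (Finset.product_subset_product hp'.2 hq'.2)⟩, hm⟩

lemma bm_zero (g : Finset (α × α)) (p q : Finset α) (h : ∀ x y, (x, y) ∈ g → x ∈ p → y ∈ q → False) :
    bmEdges g p q = 0 := by
  rw [bmEdges, Finset.card_eq_zero, Finset.filter_eq_empty_iff]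
  rintro ⟨x, y⟩ he ⟨hx, hy⟩
  exact h x y he hx hy

lemma graph_reg [DecidableEq α] {Z : Finset (Finset α)} {E : Finset (Finset (α × α))} {S V1 V2 : Finset α} {δ : ℝ}
    (h : Is2Partition Z E S) (hd : Disjoint V1 V2) (hgood : DeltaGood δ Z E)
    (p : Finset α) (hp : p ∈ partsIn Z V1) (q : Finset α) (hq : q ∈ partsIn Z V2)
    (g : Finset (α × α)) (hg : g ∈ E) : DeltaReg δ g p q := by
  have hp' := Finset.mem_filter.mp hp
  have hq' := Finset.mem_filter.mp hq
  have hpq : p ≠ q := by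
    rintro rfl
    obtain ⟨x, hx⟩ := h.1.1 p hp'.1
    exact Finset.disjoint_left.mp hd (hp'.2 hx) (hq'.2 hx)
  by_cases hs : g ⊆ p ×ˢ q
  · exact hgood g hg p hp'.1 q hq'.1 hpq hs
  · obtain ⟨A, hA, B, hB, _, hgs⟩ := h.2.1 g hg
    have h0 : bmEdges g p q = 0 := by
      apply bm_zero
      rintro x y he hx hy
      have h1 := Finset.mem_product.mp (hgs he)
      apply hs
      rw [part_uniq h.1 hp'.1 hA hx h1.1, part_uniq h.1 hq'.1 hB hy h1.2]
      exact hgs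
    intro A' _ B' _ _ _
    have : bmDens g p q = 0 := by rw [bmDens, h0]; simp
    rw [this, mul_zero, bmDens]
    positivity

lemma bm_union {β : Type*} (F : Finset (Finset (α × β)))
    (hF : ∀ g ∈ F, ∀ g' ∈ F, g ≠ g' → Disjoint g g')
    (A : Finset α) (B : Finset β) : bmDens (F.biUnion id) A B = ∑ g ∈ F, bmDens g A B := by
  simp only [bmDens, bmEdges]
  rw [← Finset.sum_div, Finset.filter_biUnion, Finset.card_biUnion]
  · push_cast; rfl
  · intro g hg g' hg' hne
    exact (hF g hg g' hg' hne).mono (Finset.filter_subset _ _) (Finset.filter_subset _ _)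

lemma union_reg {β : Type*} (F : Finset (Finset (α × β)))
    (hF : ∀ g ∈ F, ∀ g' ∈ F, g ≠ g' → Disjoint g g')
    (A : Finset α) (B : Finset β) {δ δ' : ℝ} (hδ : δ ≤ δ') (h : ∀ g ∈ F, DeltaReg δ g A B) :
    DeltaReg δ' (F.biUnion id) A B := by
  intro A' hA B' hB h1 h2
  rw [bm_union F hF, bm_union F hF, Finset.mul_sum]
  apply Finset.sum_le_sum
  intro g hg
  exact h g hg A' hA B' hB ((mul_le_mul_of_nonneg_right hδ (Nat.cast_nonneg _)).trans h1)
    ((mul_le_mul_of_nonneg_right hδ (Nat.cast_nonneg _)).trans h2)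

lemma sum_fib_le {β : Type*} (X : Finset β) (f : β → ℕ) (N : ℕ) :
    ∑ c ∈ Finset.range N, ((X.filter fun e => f e = c).card : ℝ) ≤ X.card := by
  rw [← Nat.cast_sum, Nat.cast_le, ← Finset.card_biUnion]
  · apply Finset.card_le_card
    intro x hx
    obtain ⟨c, _, h⟩ := Finset.mem_biUnion.mp hx
    exact (Finset.mem_filter.mp h).1
  · intro a _ b _ hab
    rw [Function.onFun, Finset.disjoint_left]
    intro x hx hx'
    exact hab ((Finset.mem_filter.mp hx).2.symm.trans (Finset.mem_filter.mp hx').2)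

/-- Some colour class is close to a union of members of the partition. -/
lemma choose_color {β : Type*} (T : Finset β) (hT : T.Nonempty) (P : Finset (Finset β)) (hPT : ∀ p ∈ P, p ⊆ T)
    (hP : ∀ g ∈ P, ∀ g' ∈ P, g ≠ g' → Disjoint g g') (hcov : ∀ e ∈ T, ∃ g ∈ P, e ∈ g)
    (C : β → ℕ) (N : ℕ) (hN : 0 < N) (hcl : ∀ c < N, ((T.filter fun e => C e = c).card : ℝ) = T.card / N)
    (γ : ℝ) (hγ : 0 < γ)
    (hbad : ∑ p ∈ P.filter (fun p => ¬ LabMem γ p C), (p.card : ℝ) ≤ γ * T.card) :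
    ∃ c < N, ∃ F ⊆ P, (((F.biUnion id) \ (T.filter fun e => C e = c)).card : ℝ) +
      ((T.filter fun e => C e = c) \ (F.biUnion id)).card ≤
        4 * γ * (T.filter fun e => C e = c).card := by
  have hr : ∀ p, ∃ r, LabMem γ p C → ((p.filter fun y => C y ≠ r).card : ℝ) < γ * p.card := by
    intro p
    by_cases h : LabMem γ p C
    · obtain ⟨r, hr⟩ := h; exact ⟨r, fun _ => hr⟩
    · exact ⟨0, fun h' => absurd h' h⟩
  choose r hr using hr
  have hg : ∀ e, ∃ g, e ∈ T → g ∈ P ∧ e ∈ g := by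
    intro e
    by_cases h : e ∈ T
    · obtain ⟨g, hg⟩ := hcov e h; exact ⟨g, fun _ => hg⟩
    · exact ⟨∅, fun h' => absurd h' h⟩
  choose gg hgg using hg
  have huniq : ∀ p ∈ P, ∀ e ∈ p, gg e = p := by
    intro p hp e he
    have h1 := hgg e (hPT p hp he)
    by_contra hne
    exact Finset.disjoint_left.mp (hP _ h1.1 p hp hne) h1.2 he
  have hsum : ∑ p ∈ P, (p.card : ℝ) ≤ T.card := by
    apply sum_parts_le P hPT
    intro p hp p' hp' x hx hx'
    rw [← huniq p hp x hx, huniq p' hp' x hx']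
  set X := T.filter fun e => LabMem γ (gg e) C ∧ C e ≠ r (gg e) with hX
  set Y := T.filter fun e => ¬ LabMem γ (gg e) C with hY
  have hXc : (X.card : ℝ) ≤ γ * T.card := by
    have h1 : X ⊆ (P.filter fun p => LabMem γ p C).biUnion fun p => p.filter fun y => C y ≠ r p := by
      intro e he
      rw [hX, Finset.mem_filter] at he
      have h2 := hgg e he.1
      rw [Finset.mem_biUnion]
      exact ⟨gg e, Finset.mem_filter.mpr ⟨h2.1, he.2.1⟩, Finset.mem_filter.mpr ⟨h2.2, he.2.2⟩⟩
    calc (X.card : ℝ) ≤ ∑ p ∈ P.filter fun p => LabMem γ p C, ((p.filter fun y => C y ≠ r p).card : ℝ) := by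
          exact_mod_cast (Finset.card_le_card h1).trans Finset.card_biUnion_le
      _ ≤ ∑ p ∈ P.filter fun p => LabMem γ p C, γ * (p.card : ℝ) :=
          Finset.sum_le_sum fun p hp => (hr p (Finset.mem_filter.mp hp).2).le
      _ ≤ ∑ p ∈ P, γ * (p.card : ℝ) :=
          Finset.sum_le_sum_of_subset_of_nonneg (Finset.filter_subset _ _) fun p _ _ => by positivity
      _ ≤ γ * T.card := by rw [← Finset.mul_sum]; exact mul_le_mul_of_nonneg_left hsum hγ.le
  have hYc : (Y.card : ℝ) ≤ γ * T.card := by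
    have h1 : Y ⊆ (P.filter fun p => ¬ LabMem γ p C).biUnion id := by
      intro e he
      rw [hY, Finset.mem_filter] at he
      have h2 := hgg e he.1
      rw [Finset.mem_biUnion]
      exact ⟨gg e, Finset.mem_filter.mpr ⟨h2.1, he.2⟩, h2.2⟩
    refine le_trans ?_ hbad
    exact_mod_cast (Finset.card_le_card h1).trans Finset.card_biUnion_le
  let F : ℕ → Finset (Finset β) := fun c => P.filter fun p => LabMem γ p C ∧ r p = c
  have hA : ∀ c, (F c).biUnion id \ (T.filter fun e => C e = c) ⊆ X.filter fun e => r (gg e) = c := by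
    intro c e he
    rw [Finset.mem_sdiff, Finset.mem_biUnion] at he
    obtain ⟨⟨p, hp, hep⟩, h2⟩ := he
    obtain ⟨hpP, hl, hrc⟩ := Finset.mem_filter.mp hp
    have heT := hPT p hpP hep
    have hgp := huniq p hpP e hep
    rw [Finset.mem_filter] at h2
    rw [hX, Finset.mem_filter, Finset.mem_filter, hgp]
    exact ⟨⟨heT, hl, fun h => h2 ⟨heT, h.trans hrc⟩⟩, hrc⟩
  have hB : ∀ c, (T.filter fun e => C e = c) \ (F c).biUnion id ⊆ (X ∪ Y).filter fun e => C e = c := by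
    intro c e he
    rw [Finset.mem_sdiff, Finset.mem_biUnion, Finset.mem_filter] at he
    obtain ⟨⟨heT, hc⟩, h2⟩ := he
    rw [Finset.mem_filter, Finset.mem_union, hX, hY, Finset.mem_filter, Finset.mem_filter]
    refine ⟨?_, hc⟩
    by_cases hl : LabMem γ (gg e) C
    · left
      refine ⟨heT, hl, fun h => h2 ⟨gg e, Finset.mem_filter.mpr ⟨(hgg e heT).1, hl, ?_⟩, (hgg e heT).2⟩⟩
      rw [← h, hc]
    · exact Or.inr ⟨heT, hl⟩
  by_contra hcon
  push Not at hcon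
  have hTpos : (0:ℝ) < T.card := by exact_mod_cast hT.card_pos
  have h1 : ∑ c ∈ Finset.range N, 4 * γ * ((T.card : ℝ) / N) <
      ∑ c ∈ Finset.range N, (((X.filter fun e => r (gg e) = c).card : ℝ) + ((X ∪ Y).filter fun e => C e = c).card) := by
    apply Finset.sum_lt_sum_of_nonempty
    · exact ⟨0, Finset.mem_range.mpr hN⟩
    · intro c hc
      rw [Finset.mem_range] at hc
      have h2 := hcon c hc (F c) (Finset.filter_subset _ _)
      rw [hcl c hc] at h2
      refine lt_of_lt_of_le h2 (add_le_add ?_ ?_)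
      · exact_mod_cast Finset.card_le_card (hA c)
      · exact_mod_cast Finset.card_le_card (hB c)
  rw [Finset.sum_add_distrib, Finset.sum_const, Finset.card_range, nsmul_eq_mul] at h1
  have h2 := sum_fib_le X (fun e => r (gg e)) N
  have h3 := sum_fib_le (X ∪ Y) C N
  have h4 : ((X ∪ Y).card : ℝ) ≤ X.card + Y.card := by exact_mod_cast Finset.card_union_le X Y
  have hNp : (0:ℝ) < N := by exact_mod_cast hN
  have h5 : (N : ℝ) * (4 * γ * ((T.card : ℝ) / N)) = 4 * (γ * T.card) := by field_simp
  have h6 : 0 < γ * T.card := by positivity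
  linarith

end

section
variable {α : Type*}

lemma filt_sum_le (Q : Finset (Finset α)) (A B : Finset α → Prop) (h : ∀ q ∈ Q, A q → B q) :
    ∑ q ∈ Q.filter (fun q => ¬ B q), (q.card : ℝ) ≤ ∑ q ∈ Q.filter (fun q => ¬ A q), (q.card : ℝ) := by
  apply Finset.sum_le_sum_of_subset_of_nonneg
  · intro q hq
    rw [Finset.mem_filter] at hq ⊢
    exact ⟨hq.1, fun ha => hq.2 (h q hq.1 ha)⟩
  · intro q _ _
    positivity

lemma pair_lab {V1 V2 : Finset α} {lam rho : ℕ → α → ℕ} {mL mR : ℕ → ℕ} (U : ℕ → Finset ℕ → ℕ → ℕ → Bool) (s : ℕ)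
    (hg : Good mL mR (wstar s)) (hL : Lab V1 mL lam (wstar s)) (hR : Lab V2 mR rho (wstar s)) :
    Lab (V1 ×ˢ V2) wstar (fun j e => col mL mR U (wstar j) (lam (wstar j) e.1) (rho (wstar j) e.2)) s := by
  refine ⟨fun i _ => wstar_step i, fun i _ x _ => col_lt _ _ _, ?_, ?_⟩
  · intro i hi r hr
    have h := G_card (U := U) hg hR (L := V1) (lam := lam) (wstar_mono hi) r hr
      ((V1 ×ˢ V2).filter fun e => col mL mR U (wstar i) (lam (wstar i) e.1) (rho (wstar i) e.2) = r)
      (by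
        intro x y
        rw [Finset.mem_filter, Finset.mem_product, and_assoc])
    have hp : (0:ℝ) < 2 ^ wstar i := by positivity
    rw [eq_div_iff hp.ne'] at h
    rw [Finset.card_product]
    exact_mod_cast h
  · intro i hi x hx
    rw [Finset.mem_product] at hx
    exact (col_iter hL hR (wstar_step i) (wstar_mono hi) x.1 hx.1 x.2 hx.2).symm

theorem main_aux [DecidableEq α] (s : ℕ)
    (V1 V2 V3 : Finset α)
    (hd12 : Disjoint V1 V2) (hd13 : Disjoint V1 V3) (hd23 : Disjoint V2 V3)
    (m : ℕ) (hm : m = wstar s + 1)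
    (Vp : ℕ → Finset (Finset α))
    (hpart : ∀ i, 1 ≤ i → i ≤ m → IsPartition (Vp i) (V1 ∪ V2 ∪ V3))
    (hequi : ∀ i, 1 ≤ i → i ≤ m → EquitableParts (Vp i))
    (hrefV : ∀ i, 1 ≤ i → i ≤ m → Refines (Vp i) {V1, V2, V3})
    (href : ∀ i, 1 ≤ i → i < m → Refines (Vp (i + 1)) (Vp i))
    (hcount : ∀ i, 1 ≤ i → i ≤ m →
      (partsIn (Vp i) V1).card = tfn i ∧ (partsIn (Vp i) V2).card = tfn i ∧
        (partsIn (Vp i) V3).card = tfn i) :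
    ∃ H : Finset (α × α × α),
      H ⊆ V1 ×ˢ V2 ×ˢ V3 ∧
      (H.card : ℝ) = (V1.card : ℝ) * (V2.card : ℝ) * (V3.card : ℝ) / 2 ^ s ∧
      ∀ (Z : Finset (Finset α)) (E : Finset (Finset (α × α))),
        Delta3RegPartition (1 / 2 ^ 70) H V1 V2 V3 Z E →
        ∀ i, 1 ≤ i → i ≤ wfn s →
          ApproxRefines (1 / 2 ^ 9) (partsIn Z V3) (partsIn (Vp i) V3) V3 →
          ApproxRefines (1 / 2 ^ 9) (partsIn Z V2) (partsIn (Vp i) V2) V2 →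
          ApproxRefines (1 / 2 ^ 9) (partsIn Z V1) (partsIn (Vp (i + 1)) V1) V1 := by
  have hs1 : V1 ⊆ V1 ∪ V2 ∪ V3 := fun x hx => by simp [hx]
  have hs2 : V2 ⊆ V1 ∪ V2 ∪ V3 := fun x hx => by simp [hx]
  have hs3 : V3 ⊆ V1 ∪ V2 ∪ V3 := fun x hx => by simp [hx]
  have hcl : ∀ i (h1 : 1 ≤ i) (h2 : i ≤ m), _ := fun i h1 h2 => closure3 hd12 hd13 hd23 (hrefV i h1 h2)
  have hm1 : 1 ≤ m := by omega
  obtain ⟨hne1, f1, hf1, ha1⟩ := vert_lab V1 m hm1 Vp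
    (fun i h1 h2 => partsIn_partition (hpart i h1 h2) hs1 (hcl i h1 h2).1) hequi href
    (fun i h1 h2 => (hcl i h1 h2).1) (fun i h1 h2 => (hcount i h1 h2).1)
  obtain ⟨hne2, f2, hf2, ha2⟩ := vert_lab V2 m hm1 Vp
    (fun i h1 h2 => partsIn_partition (hpart i h1 h2) hs2 (hcl i h1 h2).2.1) hequi href
    (fun i h1 h2 => (hcl i h1 h2).2.1) (fun i h1 h2 => (hcount i h1 h2).2.1)
  obtain ⟨hne3, f3, hf3, ha3⟩ := vert_lab V3 m hm1 Vp
    (fun i h1 h2 => partsIn_partition (hpart i h1 h2) hs3 (hcl i h1 h2).2.2) hequi href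
    (fun i h1 h2 => (hcl i h1 h2).2.2) (fun i h1 h2 => (hcount i h1 h2).2.2)
  have hwm : ∀ i ≤ s, wfn i ≤ m := by
    intro i hi
    rcases Nat.eq_zero_or_pos i with rfl | h
    · rw [wfn]; omega
    · have := w_lt_wstar i h
      have := wstar_mono hi
      omega
  have hL1 : Lab V1 (fun i => mexp (phi i)) (fun i => f1 (phi i)) (wstar s) := by
    apply hf1.sub
    · intro i _
      have h2 : phi (i + 1) = i + 2 := by unfold phi; rw [if_neg (by omega)]
      have h3 : phi i ≤ i + 1 := by unfold phi; split_ifs <;> omega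
      omega
    · intro i hi; unfold phi; subst hm; split_ifs <;> omega
  have hR1 : Lab V2 mexp f2 (wstar s) :=
    hf2.sub (fun i => i) _ (fun i _ => by omega) (fun i _ => by omega)
  have hR2 : Lab V3 (fun j => mexp (wfn j)) (fun j => f3 (wfn j)) s :=
    hf3.sub wfn _ (fun i _ => (w_step i).le) hwm
  have hg1 := good_one (wstar s)
  have hg2 := good_two s
  obtain ⟨U1, hU1⟩ := code_ok_exists hg1
  obtain ⟨U2, hU2⟩ := code_ok_exists hg2
  have hL2 := pair_lab U1 s hg1 hL1 hR1
  set mL1 : ℕ → ℕ := fun i => mexp (phi i) with hmL1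
  set lam1 : ℕ → α → ℕ := fun i => f1 (phi i) with hlam1
  set mR2 : ℕ → ℕ := fun j => mexp (wfn j) with hmR2
  set rho2 : ℕ → α → ℕ := fun j => f3 (wfn j) with hrho2
  set lam2 : ℕ → α × α → ℕ :=
    fun j e => col mL1 mexp U1 (wstar j) (lam1 (wstar j) e.1) (f2 (wstar j) e.2) with hlam2
  let H : Finset (α × α × α) := (V1 ×ˢ V2 ×ˢ V3).filter fun t =>
    col wstar mR2 U2 s (lam2 s (t.1, t.2.1)) (rho2 s t.2.2) = 0
  have hGH : ∀ x y, (x, y) ∈ GH3 H ↔ x ∈ V1 ×ˢ V2 ∧ y ∈ V3 ∧ col wstar mR2 U2 s (lam2 s x) (rho2 s y) = 0 := by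
    rintro ⟨a, b⟩ c
    simp only [GH3, H, Finset.mem_image, Finset.mem_filter, Finset.mem_product, Prod.mk.injEq, Prod.exists]
    constructor
    · rintro ⟨a', b', c', h, ⟨rfl, rfl⟩, rfl⟩
      tauto
    · rintro h
      exact ⟨a, b, c, by tauto, ⟨rfl, rfl⟩, rfl⟩
  have hHc : (GH3 H).card = H.card := by
    unfold GH3
    apply Finset.card_image_of_injective
    rintro ⟨a, b, c⟩ ⟨a', b', c'⟩ h
    simp only [Prod.mk.injEq] at h ⊢
    tauto
  have hcard := G_card hg2 hR2 (L := V1 ×ˢ V2) (lam := lam2) le_rfl 0 (by positivity) (GH3 H) hGH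
  refine ⟨H, Finset.filter_subset _ _, ?_, ?_⟩
  · rw [← hHc, hcard, Finset.card_product]; push_cast; ring
  intro Z E hreg i hi his hZ3 hZ2
  obtain ⟨h2p, hZr, hgood, _, _, G', hG's, hG'd, hG'r⟩ := hreg
  have hZcl := closure3 hd12 hd13 hd23 hZr
  have hP1 := partsIn_partition h2p.1 hs1 hZcl.1
  have hP2 := partsIn_partition h2p.1 hs2 hZcl.2.1
  have hP3 := partsIn_partition h2p.1 hs3 hZcl.2.2
  obtain ⟨j, hj1, hjs, hji, hij⟩ := w_choose s i hi his
  have him : i ≤ m := his.trans (hwm s le_rfl)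
  have hiws : i ≤ wstar s := hij.trans (wstar_mono hjs)
  have hgdisj : ∀ g ∈ graphsIn E V1 V2, ∀ g' ∈ graphsIn E V1 V2, g ≠ g' → Disjoint g g' :=
    fun g hg g' hg' hne => h2p.2.2.1 g (Finset.mem_filter.mp hg).1 g' (Finset.mem_filter.mp hg').1 hne
  have hgsub : ∀ g ∈ graphsIn E V1 V2, g ⊆ V1 ×ˢ V2 := fun g hg => (Finset.mem_filter.mp hg).2
  have puniq : ∀ {V : Finset α}, IsPartition (partsIn Z V) V →
      ∀ p ∈ partsIn Z V, ∀ p' ∈ partsIn Z V, ∀ x, x ∈ p → x ∈ p' → p = p' :=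
    fun h p hp p' hp' x hx hx' => part_uniq h hp hp' hx hx'
  -- step 1
  have hst1 := core hg2 hL2 hR2 hne3 hU2 hjs le_rfl 0 (by positivity) (GH3 H) hGH (1 / 2 ^ 70) (1 / 2 ^ 30)
    (by positivity) (by norm_num) le_rfl (by norm_num) (graphsIn E V1 V2) (partsIn Z V3)
    hgsub hP3.2.1
    (by
      intro p hp p' hp' x hx hx'
      by_contra hne
      exact Finset.disjoint_left.mp (hgdisj p hp p' hp' hne) hx hx')
    (puniq hP3)
    (by
      intro y hy
      obtain ⟨q, hq, _⟩ := hP3.2.2 y hy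
      exact ⟨q, hq.1, hq.2⟩)
    G' (G' \ GH3 H) (GH3 H \ G') (fun e h1 h2 => Finset.mem_sdiff.mpr ⟨h1, h2⟩)
    (fun e h1 h2 => Finset.mem_sdiff.mpr ⟨h1, h2⟩) hG'd hG'r
    (by
      refine le_trans (filt_sum_le _ _ _ ?_) hZ3
      intro q hq hA
      have hqV := hP3.2.1 q hq
      exact LabMem.mono hf3 hji him hqV ((ha3 i hi him _ (by norm_num) q hqV).mp hA))
  -- step 2
  have hNc : ∀ c < 2 ^ wstar j, (((V1 ×ˢ V2).filter fun e => lam2 j e = c).card : ℝ) =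
      ((V1 ×ˢ V2).card : ℝ) / ((2 ^ wstar j : ℕ) : ℝ) := by
    intro c hc
    have h := hL2.unif j hjs c hc
    rw [eq_div_iff (by positivity)]
    exact_mod_cast h
  obtain ⟨c, hc, F, hF, hFd⟩ := choose_color (V1 ×ˢ V2) (hne1.product hne2) (graphsIn E V1 V2) hgsub hgdisj
    (graphs_cover h2p hd12 hP1 hP2) (lam2 j) (2 ^ wstar j) (by positivity) hNc (1 / 2 ^ 30) (by positivity) hst1
  set Gc := (V1 ×ˢ V2).filter fun e => lam2 j e = c with hGc
  have hst2 := core hg1 hL1 hR1 hne2 hU1 hij (wstar_mono hjs) c hc Gc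
    (by
      intro x y
      rw [hGc, Finset.mem_filter, Finset.mem_product, and_assoc])
    (1 / 2 ^ 28) (1 / 2 ^ 9) (by positivity) (by norm_num) (by norm_num) le_rfl
    (partsIn Z V1) (partsIn Z V2) hP1.2.1 hP2.2.1 (puniq hP1) (puniq hP2)
    (by
      intro y hy
      obtain ⟨q, hq, _⟩ := hP2.2.2 y hy
      exact ⟨q, hq.1, hq.2⟩)
    (F.biUnion id) (F.biUnion id \ Gc) (Gc \ F.biUnion id) (fun e h1 h2 => Finset.mem_sdiff.mpr ⟨h1, h2⟩)
    (fun e h1 h2 => Finset.mem_sdiff.mpr ⟨h1, h2⟩)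
    (by
      have hFd' : ((F.biUnion id \ Gc).card : ℝ) + ((Gc \ F.biUnion id).card : ℝ) ≤
          4 * (1 / 2 ^ 30) * (Gc.card : ℝ) := by convert hFd
      refine le_trans hFd' (le_of_eq ?_)
      norm_num)
    (by
      intro p hp q hq
      have hu := union_reg F (fun g hg g' hg' => hgdisj g (hF hg) g' (hF hg')) p q
        (δ := 1 / 2 ^ 70) (δ' := 1 / 2 ^ 28) (by norm_num)
        (fun g hg => graph_reg h2p hd12 hgood p hp q hq g (Finset.mem_filter.mp (hF hg)).1)
      convert hu)
    (by
      refine le_trans (filt_sum_le _ _ _ ?_) hZ2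
      intro q hq hA
      exact (ha2 i hi him _ (by norm_num) q (hP2.2.1 q hq)).mp hA)
  refine le_trans (filt_sum_le _ _ _ ?_) hst2
  intro q hq hA
  have : lam1 i = f1 (i + 1) := by
    simp only [hlam1, phi, if_neg (by omega : ¬ i = 0)]
  rw [this] at hA
  exact (ha1 (i + 1) (by omega) (by omega) _ (by norm_num) q (hP1.2.1 q hq)).mpr hA

end

/-- **Key argument (Lemma 3.5).** -/
theorem key_argument {α : Type*} [DecidableEq α] (s : ℕ)
    (V1 V2 V3 : Finset α)
    (hd12 : Disjoint V1 V2) (hd13 : Disjoint V1 V3) (hd23 : Disjoint V2 V3)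
    (hsize : V1.card = V2.card ∧ V2.card = V3.card)
    (m : ℕ) (hm : m = wstar s + 1)
    (Vp : ℕ → Finset (Finset α))
    (hpart : ∀ i, 1 ≤ i → i ≤ m → IsPartition (Vp i) (V1 ∪ V2 ∪ V3))
    (hequi : ∀ i, 1 ≤ i → i ≤ m → EquitableParts (Vp i))
    (hrefV : ∀ i, 1 ≤ i → i ≤ m → Refines (Vp i) {V1, V2, V3})
    (href : ∀ i, 1 ≤ i → i < m → Refines (Vp (i + 1)) (Vp i))
    (hcount : ∀ i, 1 ≤ i → i ≤ m →
      (partsIn (Vp i) V1).card = tfn i ∧ (partsIn (Vp i) V2).card = tfn i ∧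
        (partsIn (Vp i) V3).card = tfn i) :
    ∃ H : Finset (α × α × α),
      Is3Partite H V1 V2 V3 ∧
      (H.card : ℝ) = (2 : ℝ) ^ (-(s : ℤ)) * ((V1.card : ℝ) * (V2.card : ℝ) * (V3.card : ℝ)) ∧
      ∀ (Z : Finset (Finset α)) (E : Finset (Finset (α × α))),
        Delta3RegPartition ((2 : ℝ) ^ (-70 : ℤ)) H V1 V2 V3 Z E →
        ∀ i, 1 ≤ i → i ≤ wfn s →
          ApproxRefines ((2 : ℝ) ^ (-9 : ℤ)) (partsIn Z V3) (partsIn (Vp i) V3) V3 →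
          ApproxRefines ((2 : ℝ) ^ (-9 : ℤ)) (partsIn Z V2) (partsIn (Vp i) V2) V2 →
          ApproxRefines ((2 : ℝ) ^ (-9 : ℤ)) (partsIn Z V1) (partsIn (Vp (i + 1)) V1) V1 := by
  obtain ⟨H, h1, h2, h3⟩ := main_aux s V1 V2 V3 hd12 hd13 hd23 m hm Vp hpart hequi hrefV href hcount
  refine ⟨H, ⟨⟨hd12, hd13, hd23⟩, h1⟩, ?_, ?_⟩
  · rw [h2, zpow_neg, zpow_natCast, div_eq_inv_mul]
  · have e70 : (2 : ℝ) ^ (-70 : ℤ) = 1 / 2 ^ 70 := by norm_num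
    have e9 : (2 : ℝ) ^ (-9 : ℤ) = 1 / 2 ^ 9 := by norm_num
    rw [e70, e9]
    exact h3
end

section
/- Let Q and P be partitions of the same finite set with Q ≺_δ P. Then there exist a part P ∈ P and a set Q that is a union of members of Q such that |P △ Q| ≤ 3δ|P|. -/
open scoped Classical

/-- **Claim 3.2.** If `Q ≺_δ P` then there are `p ∈ P` and a union `q` of members of `Q`
with `|p △ q| ≤ 3δ|p|`. -/
theorem approx_refinement_union {α : Type*} [DecidableEq α]
    (S : Finset α) (hS : S.Nonempty) (Q P : Finset (Finset α))
    (hQ : IsPartition Q S) (hP : IsPartition P S)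
    (δ : ℝ) (href : ApproxRefines δ Q P S) :
    ∃ p ∈ P, ∃ T ⊆ Q,
      (((p \ T.biUnion id) ∪ (T.biUnion id \ p)).card : ℝ) ≤ 3 * δ * (p.card : ℝ) := by
  have hdisj : ∀ {R : Finset (Finset α)}, IsPartition R S → ∀ a ∈ R, ∀ b ∈ R, ∀ v,
      v ∈ a → v ∈ b → a = b := by
    intro R hR a ha b hb v hva hvb
    exact (hR.2.2 v (hR.2.1 a ha hva)).unique ⟨ha, hva⟩ ⟨hb, hvb⟩
  have hsum : ∀ {R : Finset (Finset α)}, IsPartition R S →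
      ∑ q ∈ R, (q.card : ℝ) = S.card := by
    intro R hR
    have hU : R.biUnion id = S := by
      ext v
      simp only [Finset.mem_biUnion, id]
      constructor
      · rintro ⟨q, hq, hv⟩
        exact hR.2.1 q hq hv
      · intro hv
        obtain ⟨q, hq, _⟩ := hR.2.2 v hv
        exact ⟨q, hq.1, hq.2⟩
    rw [← hU, Finset.card_biUnion]
    · push_cast
      rfl
    · intro a ha b hb hab
      refine Finset.disjoint_left.2 ?_
      intro v hva hvb
      exact hab (hdisj hR a ha b hb v hva hvb)
  have hScard : (0 : ℝ) < S.card := by exact_mod_cast hS.card_pos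
  unfold ApproxRefines at href
  have hδ : 0 ≤ δ := by
    have h0 : (0 : ℝ) ≤ δ * S.card := le_trans (Finset.sum_nonneg fun _ _ => by positivity) href
    exact nonneg_of_mul_nonneg_left h0 hScard
  have hPne : P.Nonempty := by
    obtain ⟨v, hv⟩ := hS
    obtain ⟨p, hp, _⟩ := hP.2.2 v hv
    exact ⟨p, hp.1⟩
  have hch : ∀ q, ∃ p, ApproxMem δ q P → p ∈ P ∧ ApproxSub δ q p := by
    intro q
    by_cases h : ApproxMem δ q P
    · obtain ⟨p, hp, h'⟩ := h
      exact ⟨p, fun _ => ⟨hp, h'⟩⟩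
    · exact ⟨∅, fun h' => absurd h' h⟩
  choose f hf using hch
  set B := Q.filter fun q => ¬ ApproxMem δ q P with hB
  set G := Q.filter fun q => ApproxMem δ q P with hG
  have hGm : ∀ q, q ∈ G ↔ q ∈ Q ∧ ApproxMem δ q P := fun q => by rw [hG, Finset.mem_filter]
  have hBm : ∀ q, q ∈ B ↔ q ∈ Q ∧ ¬ ApproxMem δ q P := fun q => by rw [hB, Finset.mem_filter]
  have hGQ : G ⊆ Q := Finset.filter_subset _ _
  -- the total error inside the good parts
  have herr : ∑ q ∈ G, ((q \ f q).card : ℝ) ≤ δ * S.card := by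
    calc ∑ q ∈ G, ((q \ f q).card : ℝ) ≤ ∑ q ∈ G, δ * (q.card : ℝ) :=
          Finset.sum_le_sum fun q hq => le_of_lt (hf q ((hGm q).1 hq).2).2
      _ ≤ ∑ q ∈ Q, δ * (q.card : ℝ) :=
          Finset.sum_le_sum_of_subset_of_nonneg hGQ fun _ _ _ => by positivity
      _ = δ * S.card := by rw [← Finset.mul_sum, hsum hQ]
  let T : Finset α → Finset (Finset α) := fun p => G.filter fun q => f q = p
  have hT : ∀ p q, q ∈ T p ↔ q ∈ G ∧ f q = p := fun p q => Finset.mem_filter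
  have h1 : ∑ p ∈ P, (((T p).biUnion id \ p).card : ℝ) ≤ δ * S.card := by
    refine le_trans ?_ herr
    rw [← Finset.sum_fiberwise_of_maps_to (s := G) (t := P) (g := f)
      (fun q hq => (hf q ((hGm q).1 hq).2).1)]
    refine Finset.sum_le_sum fun p _ => ?_
    have hsub : (T p).biUnion id \ p ⊆ (T p).biUnion fun q => q \ f q := by
      intro v hv
      simp only [Finset.mem_sdiff, Finset.mem_biUnion, id] at hv ⊢
      obtain ⟨⟨q, hq, hvq⟩, hvp⟩ := hv
      refine ⟨q, hq, hvq, ?_⟩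
      rw [((hT p q).1 hq).2]
      exact hvp
    have := (Finset.card_le_card hsub).trans Finset.card_biUnion_le
    exact_mod_cast this
  have h2 : ∑ p ∈ P, ((p \ (T p).biUnion id).card : ℝ) ≤ 2 * δ * S.card := by
    have hd : (P.biUnion fun p => p \ (T p).biUnion id).card
        = ∑ p ∈ P, (p \ (T p).biUnion id).card := by
      refine Finset.card_biUnion ?_
      intro a ha b hb hab
      refine Finset.disjoint_left.2 ?_
      intro v hva hvb
      exact hab (hdisj hP a ha b hb v (Finset.mem_sdiff.1 hva).1 (Finset.mem_sdiff.1 hvb).1)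
    have hsub : (P.biUnion fun p => p \ (T p).biUnion id) ⊆
        B.biUnion id ∪ G.biUnion fun q => q \ f q := by
      intro v hv
      simp only [Finset.mem_sdiff, Finset.mem_biUnion, Finset.mem_union, id] at hv ⊢
      obtain ⟨p, hp, hvp, hvT⟩ := hv
      obtain ⟨q, ⟨hq, hvq⟩, _⟩ := hQ.2.2 v (hP.2.1 p hp hvp)
      by_cases h : ApproxMem δ q P
      · right
        refine ⟨q, (hGm q).2 ⟨hq, h⟩, hvq, fun hvf => hvT ⟨q, ?_, hvq⟩⟩
        exact (hT p q).2 ⟨(hGm q).2 ⟨hq, h⟩, hdisj hP _ (hf q h).1 p hp v hvf hvp⟩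
      · left
        exact ⟨q, (hBm q).2 ⟨hq, h⟩, hvq⟩
    have h3 : ∑ p ∈ P, (p \ (T p).biUnion id).card ≤
        ∑ q ∈ B, q.card + ∑ q ∈ G, (q \ f q).card := by
      rw [← hd]
      refine (Finset.card_le_card hsub).trans ((Finset.card_union_le _ _).trans ?_)
      exact add_le_add Finset.card_biUnion_le Finset.card_biUnion_le
    have h4 : ∑ p ∈ P, ((p \ (T p).biUnion id).card : ℝ) ≤
        ∑ q ∈ B, (q.card : ℝ) + ∑ q ∈ G, ((q \ f q).card : ℝ) := by exact_mod_cast h3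
    linarith
  have htot : ∑ p ∈ P, (((p \ (T p).biUnion id) ∪ ((T p).biUnion id \ p)).card : ℝ) ≤
      ∑ p ∈ P, 3 * δ * (p.card : ℝ) := by
    rw [← Finset.mul_sum, hsum hP]
    have h5 : ∑ p ∈ P, (((p \ (T p).biUnion id) ∪ ((T p).biUnion id \ p)).card : ℝ) ≤
        ∑ p ∈ P, (((p \ (T p).biUnion id).card : ℝ) + (((T p).biUnion id \ p).card : ℝ)) :=
      Finset.sum_le_sum fun p _ => by exact_mod_cast Finset.card_union_le _ _
    rw [Finset.sum_add_distrib] at h5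
    linarith
  obtain ⟨p, hp, hle⟩ := Finset.exists_le_of_sum_le hPne htot
  exact ⟨p, hp, T p, (Finset.filter_subset _ _).trans hGQ, hle⟩
end
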